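/- Law of large numbers for Betti numbers: fix integers 0 ≤ q < d and t ∈ [0,1]. Let P be any stationary and ergodic probability measure on the configuration space Ω = [0,1]^{K^d}. Then there exists a non-random constant β̂_q(t) (depending only on d, q, t, and P) such that |Λ_n|^{−1} β_q^n(t) converges to β̂_q(t) as n → ∞, P-almost surely. Moreover β̂_q(t) = limsup_{n→∞} |Λ_n|^{−1} E[β_q^n(t)]. -/

import Mathlib

open MeasureTheory Filter Topology

noncomputable section

/-- An elementary cube in `ℝ^d`: the `i`-th component is the elementary interval
`[l, l+1]` if the Boolean is `true` (nondegenerate) and `[l, l]` if `false` (degenerate). -/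
abbrev ElemCube (d : ℕ) := Fin d → ℤ × Bool

/-- The dimension of an elementary cube: the number of nondegenerate components. -/
def cubeDim {d : ℕ} (Q : ElemCube d) : ℕ :=
  (Finset.univ.filter fun i => (Q i).2 = true).card

/-- The geometric realization of an elementary cube as a subset of `ℝ^d`. -/
def cubeSet {d : ℕ} (Q : ElemCube d) : Set (Fin d → ℝ) :=
  {x | ∀ i, x i ∈ Set.Icc ((Q i).1 : ℝ) ((Q i).1 + (if (Q i).2 then 1 else 0))}

/-- A cubical set is a union of elementary cubes. -/
def IsCubical {d : ℕ} (X : Set (Fin d → ℝ)) : Prop :=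
  ∃ S : Set (ElemCube d), X = ⋃ Q ∈ S, cubeSet Q

/-- The free `ℤ`-module generated by all elementary cubes of `ℝ^d` (all dimensions mixed). -/
abbrev CubChain (d : ℕ) := ElemCube d →₀ ℤ

/-- The cubical boundary of a single elementary cube, defined by induction on the ambient
dimension, following the inductive definition: in `ℝ¹`, `∂ [l,l+1]^ = [l+1]^ - [l]^` and
`∂ Q̂ = 0` for degenerate `Q`; and for `Q = I × P`,
`∂ Q̂ = (∂ Î) ⋄ P̂ + (-1)^(dim I) Î ⋄ (∂ P̂)`, where `⋄` is the cubical product. -/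
def boundaryCube : (d : ℕ) → ElemCube d → CubChain d
  | 0, _ => 0
  | d + 1, Q =>
      (if (Q 0).2 then
          Finsupp.single (Fin.cons ((Q 0).1 + 1, false) (fun i => Q i.succ)) (1 : ℤ)
            - Finsupp.single (Fin.cons ((Q 0).1, false) (fun i => Q i.succ)) (1 : ℤ)
        else 0)
      + (if (Q 0).2 then (-1 : ℤ) else 1) •
          (boundaryCube d (fun i => Q i.succ)).sum
            (fun R n => Finsupp.single (Fin.cons (Q 0) R) n)

/-- The cubical boundary operator, the `ℤ`-linear extension of `boundaryCube`. -/
def boundaryHom (d : ℕ) : CubChain d →ₗ[ℤ] CubChain d :=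
  Finsupp.lsum ℤ fun Q => LinearMap.toSpanSingleton ℤ (CubChain d) (boundaryCube d Q)

/-- `C_k^d(X)`: the submodule of chains supported on the `k`-dimensional elementary cubes
contained in `X`. -/
def chainsOn (d k : ℕ) (X : Set (Fin d → ℝ)) : Submodule ℤ (CubChain d) :=
  Finsupp.supported ℤ ℤ {Q : ElemCube d | cubeDim Q = k ∧ cubeSet Q ⊆ X}

/-- `Z_q(X) = ker ∂_q^X`, the cycles of the cubical set `X` in degree `q`. -/
def cycleMod (d q : ℕ) (X : Set (Fin d → ℝ)) : Submodule ℤ (CubChain d) :=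
  chainsOn d q X ⊓ LinearMap.ker (boundaryHom d)

/-- `B_q(X) = im ∂_{q+1}^X`, the boundaries of the cubical set `X` in degree `q`. -/
def boundaryMod (d q : ℕ) (X : Set (Fin d → ℝ)) : Submodule ℤ (CubChain d) :=
  Submodule.map (boundaryHom d) (chainsOn d (q + 1) X)

/-- The `q`-th Betti number of a cubical set: the rank of the free part of the `q`-th
cubical homology `H_q(X) = Z_q(X) / B_q(X)`. -/
def betti (d q : ℕ) (X : Set (Fin d → ℝ)) : ℕ :=
  Module.finrank ℤ
    (↥(cycleMod d q X) ⧸ (boundaryMod d q X).comap (cycleMod d q X).subtype)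

/-- `Λ_n = [-n, n]^d ⊆ ℝ^d`. -/
def lambda (d n : ℕ) : Set (Fin d → ℝ) := {x | ∀ i, x i ∈ Set.Icc (-(n : ℝ)) n}

/-- The configuration space `Ω = [0,1]^{K^d}` with the product σ-field. -/
abbrev Config (d : ℕ) := ElemCube d → unitInterval

/-- Translation of an elementary cube by `x ∈ ℤ^d`. -/
def translateCube {d : ℕ} (x : Fin d → ℤ) (Q : ElemCube d) : ElemCube d :=
  fun i => ((Q i).1 + x i, (Q i).2)

/-- The translation action `τ_x` on configurations: `(τ_x ω)_Q = ω_{-x+Q}`. -/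
def configShift {d : ℕ} (x : Fin d → ℤ) (ω : Config d) : Config d :=
  fun Q => ω (translateCube (-x) Q)

/-- Stationarity of a measure on configuration space: `P(τ_x⁻¹ A) = P(A)`. -/
def Stationary {d : ℕ} (P : Measure (Config d)) : Prop :=
  ∀ (x : Fin d → ℤ) (A : Set (Config d)), MeasurableSet A → P (configShift x ⁻¹' A) = P A

/-- Ergodicity of a measure on configuration space under translations. -/
def ErgodicConfig {d : ℕ} (P : Measure (Config d)) : Prop :=
  ∀ A : Set (Config d), MeasurableSet A →
    (∀ x : Fin d → ℤ, configShift x ⁻¹' A = A) → P A = 0 ∨ P A = 1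

/-- The random cubical set `X(t) = ⋃ {Q ∈ K^d : ω_Q ≤ t}`. -/
def cubSet {d : ℕ} (ω : Config d) (t : ℝ) : Set (Fin d → ℝ) :=
  ⋃ Q ∈ {Q : ElemCube d | (ω Q : ℝ) ≤ t}, cubeSet Q

/-- `β_q^n(t)(ω) = β_q(X(t) ∩ Λ_n)`. -/
def bettiN (d q n : ℕ) (t : ℝ) (ω : Config d) : ℕ :=
  betti d q (cubSet ω t ∩ lambda d n)

/-- `β̂_q(t) := limsup_{n → ∞} |Λ_n|⁻¹ E[β_q^n(t)]`, where `|Λ_n| = (2n)^d`. -/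
def betaHat (d q : ℕ) (P : Measure (Config d)) (t : ℝ) : ℝ :=
  limsup (fun n : ℕ => ((2 * (n : ℝ)) ^ d)⁻¹ * ∫ ω, (bettiN d q n t ω : ℝ) ∂P) atTop

/-!
A Betti number of a finite face-closed family of cells is a number of cells minus the ranks of two
boundary operators. It is therefore additive over disjoint families, invariant under translations,
and changes by at most the number of added cells when the family grows. Fix `L`: the translates of
the block `[0, L]^d` with corners in one residue class modulo `L + 1` are disjoint and cover all
but a vanishing proportion (as `L → ∞`) of the cells of `Λ_n`. Averaging over the residue classes,
`(L + 1)^d β_q^n(t)` is, up to that error, the sum over `ℤ^d ∩ Λ_n` of the shifts of one bounded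
observable, and the ergodic theorem for `ℤ^d` makes its averages converge to a constant.

The ergodic theorem for `ℤ^d` is obtained by multiplying one-dimensional actions: the inner
averages converge almost everywhere to a limit depending on their number, and Maker's argument,
which dominates the tail of such a sequence by its supremum, lets the outer averages be taken
along the converging observables.
-/

section BoundedSequence

variable {u v : ℕ → ℝ} {C : ℝ}

lemma isBoundedUnder_le_of_abs_le (hu : ∀ n, |u n| ≤ C) : IsBoundedUnder (· ≤ ·) atTop u :=
  isBoundedUnder_of ⟨C, fun n => (abs_le.1 (hu n)).2⟩

lemma isBoundedUnder_ge_of_abs_le (hu : ∀ n, |u n| ≤ C) : IsBoundedUnder (· ≥ ·) atTop u :=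
  isBoundedUnder_of ⟨-C, fun n => (abs_le.1 (hu n)).1⟩

lemma abs_limsup_le (hu : ∀ n, |u n| ≤ C) : |limsup u atTop| ≤ C :=
  abs_le.2
    ⟨le_limsup_of_frequently_le (Frequently.of_forall fun n => (abs_le.1 (hu n)).1)
      (isBoundedUnder_le_of_abs_le hu),
    limsup_le_of_le (isBoundedUnder_ge_of_abs_le hu).isCoboundedUnder_le
      (Eventually.of_forall fun n => (abs_le.1 (hu n)).2)⟩

lemma limsup_neg_eq_neg_liminf (hu : ∀ n, |u n| ≤ C) :
    limsup (fun n => -u n) atTop = -liminf u atTop :=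
  (Antitone.map_liminf_of_continuousAt (fun _ _ => neg_le_neg) u continuous_neg.continuousAt
    (isBoundedUnder_le_of_abs_le hu).isCoboundedUnder_ge
    (isBoundedUnder_ge_of_abs_le hu)).symm

lemma limsup_le_limsup_of_tendsto_sub_zero (hu : ∀ n, |u n| ≤ C) (hv : ∀ n, |v n| ≤ C)
    (huv : Tendsto (fun n => u n - v n) atTop (𝓝 0)) : limsup u atTop ≤ limsup v atTop := by
  refine le_of_forall_pos_le_add fun ε hε => ?_
  have hv_lt : ∀ᶠ n in atTop, v n < limsup v atTop + ε / 2 :=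
    eventually_lt_of_limsup_lt (by linarith) (isBoundedUnder_le_of_abs_le hv)
  have huv_lt : ∀ᶠ n in atTop, u n - v n < ε / 2 := huv.eventually_lt_const (by linarith)
  refine limsup_le_of_le (isBoundedUnder_ge_of_abs_le hu).isCoboundedUnder_le ?_
  filter_upwards [hv_lt, huv_lt] with n h₁ h₂
  linarith

lemma limsup_eq_of_tendsto_sub_zero (hu : ∀ n, |u n| ≤ C) (hv : ∀ n, |v n| ≤ C)
    (huv : Tendsto (fun n => u n - v n) atTop (𝓝 0)) : limsup u atTop = limsup v atTop :=
  (limsup_le_limsup_of_tendsto_sub_zero hu hv huv).antisymm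
    (limsup_le_limsup_of_tendsto_sub_zero hv hu (by simpa using huv.neg))

end BoundedSequence

section Birkhoff

variable {Ω : Type*} {T : Ω → Ω} {f g : Ω → ℝ} {C : ℝ}

/-- The maximum of `0` and of the first `n` Birkhoff sums of `g`, defined through the recursion
`M_{n+1} = max 0 (g + M_n ∘ T)` on which the maximal inequality rests. -/
def maxBirkhoffSum (T : Ω → Ω) (g : Ω → ℝ) : ℕ → Ω → ℝ
  | 0, _ => 0
  | n + 1, ω => max 0 (g ω + maxBirkhoffSum T g n (T ω))

lemma maxBirkhoffSum_nonneg (n : ℕ) (ω : Ω) : 0 ≤ maxBirkhoffSum T g n ω := by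
  cases n with
  | zero => exact le_rfl
  | succ n => exact le_max_left _ _

lemma monotone_maxBirkhoffSum : Monotone (maxBirkhoffSum T g) := by
  refine monotone_nat_of_le_succ fun n => ?_
  induction n with
  | zero => exact fun ω => maxBirkhoffSum_nonneg 1 ω
  | succ n ih => exact fun ω => max_le_max le_rfl (add_le_add le_rfl (ih (T ω)))

lemma birkhoffSum_le_maxBirkhoffSum (n : ℕ) (ω : Ω) :
    birkhoffSum T g n ω ≤ maxBirkhoffSum T g n ω := by
  induction n generalizing ω with
  | zero => exact le_rfl
  | succ n ih =>
    rw [birkhoffSum_succ']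
    exact le_max_of_le_right (add_le_add le_rfl (ih (T ω)))

lemma maxBirkhoffSum_sub_comp_le_indicator (n : ℕ) (ω : Ω) :
    maxBirkhoffSum T g (n + 1) ω - maxBirkhoffSum T g (n + 1) (T ω)
      ≤ {ω | 0 < maxBirkhoffSum T g (n + 1) ω}.indicator g ω := by
  by_cases hω : ω ∈ {ω | 0 < maxBirkhoffSum T g (n + 1) ω}
  · rw [Set.indicator_of_mem hω]
    have hpos : 0 < maxBirkhoffSum T g (n + 1) ω := hω
    have hmax : maxBirkhoffSum T g (n + 1) ω = g ω + maxBirkhoffSum T g n (T ω) :=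
      (max_choice _ _).resolve_left hpos.ne'
    have := monotone_maxBirkhoffSum (T := T) (g := g) n.le_succ (T ω)
    linarith
  · rw [Set.indicator_of_notMem hω]
    have hnonpos : maxBirkhoffSum T g (n + 1) ω ≤ 0 := not_lt.1 hω
    have := maxBirkhoffSum_nonneg (T := T) (g := g) (n + 1) (T ω)
    linarith

lemma abs_birkhoffAverage_le (hf : ∀ ω, |f ω| ≤ C) (n : ℕ) (ω : Ω) :
    |birkhoffAverage ℝ T f n ω| ≤ C := by
  have hsum : |birkhoffSum T f n ω| ≤ n * C := by
    simpa [birkhoffSum] using Finset.abs_sum_le_sum_abs _ _ |>.trans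
      (Finset.sum_le_card_nsmul (Finset.range n) _ C fun i _ => hf (T^[i] ω))
  rcases n.eq_zero_or_pos with rfl | hn
  · simpa using (abs_nonneg _).trans (hf ω)
  · rw [birkhoffAverage, smul_eq_mul, abs_mul, abs_of_nonneg (by positivity),
      inv_mul_le_iff₀ (by exact_mod_cast hn)]
    exact hsum

lemma limsup_birkhoffAverage_apply (hf : ∀ ω, |f ω| ≤ C) (ω : Ω) :
    limsup (fun n => birkhoffAverage ℝ T f n (T ω)) atTop
      = limsup (fun n => birkhoffAverage ℝ T f n ω) atTop := by
  refine limsup_eq_of_tendsto_sub_zero (fun n => abs_birkhoffAverage_le hf n _)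
    (fun n => abs_birkhoffAverage_le hf n _)
    (tendsto_birkhoffAverage_apply_sub_birkhoffAverage ℝ ?_)
  refine (Metric.isBounded_closedBall (x := (0 : ℝ)) (r := C)).subset ?_
  rintro _ ⟨n, rfl⟩
  simpa using hf _

lemma exists_birkhoffSum_pos {F : Ω → ℝ} (hf : ∀ ω, |f ω| ≤ C) (hF : F ∘ T = F) {ω : Ω}
    (hω : F ω < limsup (fun n => birkhoffAverage ℝ T f n ω) atTop) :
    ∃ n, 0 < birkhoffSum T (f - F) n ω := by
  have hfreq := frequently_lt_of_lt_limsup (isBoundedUnder_ge_of_abs_le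
    fun n => abs_birkhoffAverage_le hf n ω).isCoboundedUnder_le hω
  obtain ⟨n, hn, hn0⟩ := (hfreq.and_eventually (eventually_gt_atTop 0)).exists
  refine ⟨n, ?_⟩
  rw [birkhoffAverage, smul_eq_mul, lt_inv_mul_iff₀ (by exact_mod_cast hn0)] at hn
  rw [birkhoffSum_sub, birkhoffSum_of_comp_eq hF]
  simpa using hn

variable [MeasurableSpace Ω] {μ : Measure Ω}

lemma measurable_maxBirkhoffSum (hT : Measurable T) (hg : Measurable g) (n : ℕ) :
    Measurable (maxBirkhoffSum T g n) := by
  induction n with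
  | zero => exact measurable_const
  | succ n ih => exact measurable_const.max (hg.add (ih.comp hT))

lemma integrable_maxBirkhoffSum (hT : MeasurePreserving T μ μ) (hg : Integrable g μ) (n : ℕ) :
    Integrable (maxBirkhoffSum T g n) μ := by
  induction n with
  | zero => exact integrable_zero _ _ _
  | succ n ih =>
    exact (integrable_zero _ _ _).sup (hg.add (hT.integrable_comp_of_integrable ih))

lemma integral_comp_measurePreserving (hT : MeasurePreserving T μ μ) (hf : Measurable f) :
    ∫ ω, f (T ω) ∂μ = ∫ ω, f ω ∂μ := by
  conv_rhs => rw [← hT.map_eq, integral_map hT.aemeasurable hf.aestronglyMeasurable]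

lemma setIntegral_maxBirkhoffSum_pos_nonneg (hT : MeasurePreserving T μ μ) (hg : Measurable g)
    (hgi : Integrable g μ) (n : ℕ) :
    0 ≤ ∫ ω in {ω | 0 < maxBirkhoffSum T g (n + 1) ω}, g ω ∂μ := by
  set M := maxBirkhoffSum T g (n + 1)
  have hM : Measurable M := measurable_maxBirkhoffSum hT.measurable hg _
  have hMi : Integrable M μ := integrable_maxBirkhoffSum hT hgi _
  have hMTi : Integrable (fun ω => M (T ω)) μ := hT.integrable_comp_of_integrable hMi
  have hpos : MeasurableSet {ω | 0 < M ω} := measurableSet_lt measurable_const hM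
  calc 0 = ∫ ω, M ω - M (T ω) ∂μ := by
        rw [integral_sub hMi hMTi, integral_comp_measurePreserving hT hM, sub_self]
    _ ≤ ∫ ω, {ω | 0 < M ω}.indicator g ω ∂μ :=
        integral_mono (hMi.sub hMTi) (hgi.indicator hpos)
          (maxBirkhoffSum_sub_comp_le_indicator n)
    _ = ∫ ω in {ω | 0 < M ω}, g ω ∂μ := integral_indicator hpos

lemma integral_nonneg_of_forall_exists_birkhoffSum_pos (hT : MeasurePreserving T μ μ)
    (hg : Measurable g) (hgi : Integrable g μ) (hpos : ∀ ω, ∃ n, 0 < birkhoffSum T g n ω) :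
    0 ≤ ∫ ω, g ω ∂μ := by
  set A : ℕ → Set Ω := fun n => {ω | 0 < maxBirkhoffSum T g (n + 1) ω}
  have hA : ∀ n, MeasurableSet (A n) := fun n =>
    measurableSet_lt measurable_const (measurable_maxBirkhoffSum hT.measurable hg _)
  have hmono : Monotone A := fun m n hmn ω hω =>
    hω.trans_le (monotone_maxBirkhoffSum (Nat.succ_le_succ hmn) ω)
  have hunion : ⋃ n, A n = Set.univ := Set.eq_univ_of_forall fun ω => by
    obtain ⟨n, hn⟩ := hpos ω
    exact Set.mem_iUnion.2 ⟨n, hn.trans_le <| (birkhoffSum_le_maxBirkhoffSum n ω).trans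
      (monotone_maxBirkhoffSum n.le_succ ω)⟩
  have hlim := tendsto_setIntegral_of_monotone (f := g) hA hmono hgi.integrableOn
  rw [hunion, setIntegral_univ] at hlim
  exact ge_of_tendsto' hlim fun n => setIntegral_maxBirkhoffSum_pos_nonneg hT hg hgi n

lemma measurable_birkhoffAverage (hT : Measurable T) (hf : Measurable f) (n : ℕ) :
    Measurable (birkhoffAverage ℝ T f n) :=
  (Finset.measurable_sum (Finset.range n) fun i _ => hf.comp (hT.iterate i)).const_smul
    ((n : ℝ)⁻¹)

variable [IsFiniteMeasure μ]

lemma integrable_of_forall_abs_le (hf : Measurable f) (hfC : ∀ ω, |f ω| ≤ C) : Integrable f μ :=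
  Integrable.of_bound hf.aestronglyMeasurable C (Eventually.of_forall hfC)

lemma integral_limsup_birkhoffAverage_le (hT : MeasurePreserving T μ μ) (hf : Measurable f)
    (hfC : ∀ ω, |f ω| ≤ C) :
    ∫ ω, limsup (fun n => birkhoffAverage ℝ T f n ω) atTop ∂μ ≤ ∫ ω, f ω ∂μ := by
  set F : Ω → ℝ := fun ω => limsup (fun n => birkhoffAverage ℝ T f n ω) atTop
  have hF : Measurable F := Measurable.limsup fun n => measurable_birkhoffAverage hT.measurable hf n
  have hFi : Integrable F μ :=
    integrable_of_forall_abs_le hF fun ω => abs_limsup_le fun n => abs_birkhoffAverage_le hfC n ω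
  have hfi : Integrable f μ := integrable_of_forall_abs_le hf hfC
  suffices h : ∀ ε > 0, ∫ ω, F ω ∂μ ≤ ∫ ω, f ω ∂μ + μ.real Set.univ * ε by
    have hlim : Tendsto (fun ε => ∫ ω, f ω ∂μ + μ.real Set.univ * ε) (𝓝[>] 0)
        (𝓝 (∫ ω, f ω ∂μ + μ.real Set.univ * 0)) :=
      ((continuous_const_mul _).const_add _).continuousWithinAt
    rw [mul_zero, add_zero] at hlim
    exact ge_of_tendsto hlim (eventually_mem_nhdsWithin.mono h)
  intro ε hε
  have hFεi : Integrable (fun ω => F ω - ε) μ := hFi.sub (integrable_const ε)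
  have hnonneg : 0 ≤ ∫ ω, (f - fun ω => F ω - ε) ω ∂μ := by
    refine integral_nonneg_of_forall_exists_birkhoffSum_pos hT (hf.sub (hF.sub_const ε))
      (hfi.sub hFεi) fun ω => exists_birkhoffSum_pos hfC ?_ (sub_lt_self (F ω) hε)
    exact funext fun ω => congrArg (· - ε) (limsup_birkhoffAverage_apply hfC ω)
  rw [integral_sub' hfi hFεi, integral_sub hFi (integrable_const ε)] at hnonneg
  simp only [integral_const, smul_eq_mul] at hnonneg
  linarith

lemma le_integral_liminf_birkhoffAverage (hT : MeasurePreserving T μ μ) (hf : Measurable f)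
    (hfC : ∀ ω, |f ω| ≤ C) :
    ∫ ω, f ω ∂μ ≤ ∫ ω, liminf (fun n => birkhoffAverage ℝ T f n ω) atTop ∂μ := by
  have h := integral_limsup_birkhoffAverage_le hT hf.neg (C := C) fun ω => by simpa using hfC ω
  simp only [birkhoffAverage_neg, Pi.neg_apply,
    limsup_neg_eq_neg_liminf fun n => abs_birkhoffAverage_le hfC n _, integral_neg] at h
  exact neg_le_neg_iff.1 h

theorem ae_exists_tendsto_birkhoffAverage (hT : MeasurePreserving T μ μ) (hf : Measurable f)
    (hfC : ∀ ω, |f ω| ≤ C) :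
    ∀ᵐ ω ∂μ, ∃ a, Tendsto (fun n => birkhoffAverage ℝ T f n ω) atTop (𝓝 a) := by
  have hbdd : ∀ ω n, |birkhoffAverage ℝ T f n ω| ≤ C := fun ω n => abs_birkhoffAverage_le hfC n ω
  have havg := fun n => measurable_birkhoffAverage hT.measurable hf n
  have hle : ∀ ω, liminf (fun n => birkhoffAverage ℝ T f n ω) atTop
      ≤ limsup (fun n => birkhoffAverage ℝ T f n ω) atTop := fun ω =>
    liminf_le_limsup (isBoundedUnder_le_of_abs_le (hbdd ω)) (isBoundedUnder_ge_of_abs_le (hbdd ω))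
  have hsup : Integrable (fun ω => limsup (fun n => birkhoffAverage ℝ T f n ω) atTop) μ :=
    integrable_of_forall_abs_le (Measurable.limsup havg) fun ω => abs_limsup_le (hbdd ω)
  have hinf : Integrable (fun ω => liminf (fun n => birkhoffAverage ℝ T f n ω) atTop) μ := by
    refine integrable_of_forall_abs_le (C := C) (Measurable.liminf havg) fun ω => ?_
    rw [← abs_neg, ← limsup_neg_eq_neg_liminf (hbdd ω)]
    exact abs_limsup_le fun n => by simpa using hbdd ω n
  have hint : ∫ ω, liminf (fun n => birkhoffAverage ℝ T f n ω) atTop ∂μ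
      = ∫ ω, limsup (fun n => birkhoffAverage ℝ T f n ω) atTop ∂μ :=
    (integral_mono hinf hsup hle).antisymm <| (integral_limsup_birkhoffAverage_le hT hf hfC).trans
      (le_integral_liminf_birkhoffAverage hT hf hfC)
  filter_upwards [(integral_eq_iff_of_ae_le hinf hsup (Eventually.of_forall hle)).1 hint] with ω hω
  exact ⟨_, tendsto_of_liminf_eq_limsup hω rfl (isBoundedUnder_le_of_abs_le (hbdd ω))
    (isBoundedUnder_ge_of_abs_le (hbdd ω))⟩

end Birkhoff

section OrbitAverage

open scoped BigOperators

variable {Ω ι κ : Type*} {S : ι → Ω → Ω} {T : κ → Ω → Ω} {I : ℕ → Finset ι} {J : ℕ → Finset κ}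
  {f : Ω → ℝ} {C : ℝ}

/-- The average of `f` over the points `S i ω` with `i ∈ s`; it is `0` if `s` is empty. -/
def orbitAverage (S : ι → Ω → Ω) (s : Finset ι) (f : Ω → ℝ) (ω : Ω) : ℝ :=
  𝔼 i ∈ s, f (S i ω)

lemma abs_orbitAverage_le (hfC : ∀ ω, |f ω| ≤ C) (s : Finset ι) (ω : Ω) :
    |orbitAverage S s f ω| ≤ C := by
  rcases s.eq_empty_or_nonempty with rfl | hs
  · simpa [orbitAverage] using (abs_nonneg _).trans (hfC ω)
  · exact (Finset.abs_expect_le _ _).trans (Finset.expect_le hs fun i _ => hfC _)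

lemma orbitAverage_nonneg (hf : ∀ ω, 0 ≤ f ω) (s : Finset ι) (ω : Ω) :
    0 ≤ orbitAverage S s f ω :=
  Finset.expect_nonneg fun _ _ => hf _

lemma abs_orbitAverage_sub_le {f g h : Ω → ℝ} (hfg : ∀ ω, |f ω - g ω| ≤ h ω) (s : Finset ι)
    (ω : Ω) : |orbitAverage S s f ω - orbitAverage S s g ω| ≤ orbitAverage S s h ω := by
  rw [orbitAverage, orbitAverage, ← Finset.expect_sub_distrib]
  exact (Finset.abs_expect_le _ _).trans (Finset.expect_le_expect fun i _ => hfg _)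

lemma orbitAverage_product (s : Finset ι) (t : Finset κ) (ω : Ω) :
    orbitAverage (fun p : ι × κ => T p.2 ∘ S p.1) (s ×ˢ t) f ω
      = orbitAverage S s (orbitAverage T t f) ω :=
  Finset.expect_product' s t fun i j => f (T j (S i ω))

section TailSup

variable {F : ℕ → Ω → ℝ} {N : ℕ} {ω : Ω}

/-- The supremum of the errors `|F n - f|` over `n ≥ N`; it is `0` where they are unbounded. -/
def tailSup (F : ℕ → Ω → ℝ) (f : Ω → ℝ) (N : ℕ) (ω : Ω) : ℝ :=
  ⨆ m : ℕ, |F (N + m) ω - f ω|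

lemma tailSup_nonneg : 0 ≤ tailSup F f N ω :=
  Real.iSup_nonneg fun _ => abs_nonneg _

lemma tailSup_le (hF : ∀ n ≥ N, |F n ω - f ω| ≤ C) : tailSup F f N ω ≤ C :=
  ciSup_le fun m => hF _ (N.le_add_right m)

lemma abs_sub_le_tailSup (hF : ∀ n ≥ N, |F n ω - f ω| ≤ C) {n : ℕ} (hn : N ≤ n) :
    |F n ω - f ω| ≤ tailSup F f N ω := by
  obtain ⟨m, rfl⟩ := Nat.exists_eq_add_of_le hn
  exact le_ciSup (f := fun m : ℕ => |F (N + m) ω - f ω|)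
    ⟨C, Set.forall_mem_range.2 fun m => hF _ (N.le_add_right m)⟩ m

lemma tendsto_tailSup (h : Tendsto (fun n => F n ω) atTop (𝓝 (f ω))) :
    Tendsto (fun N => tailSup F f N ω) atTop (𝓝 0) := by
  refine Metric.tendsto_atTop.2 fun ε hε => ?_
  obtain ⟨N, hN⟩ := Metric.tendsto_atTop.1 h (ε / 2) (half_pos hε)
  refine ⟨N, fun M hM => ?_⟩
  rw [Real.dist_eq, sub_zero, abs_of_nonneg tailSup_nonneg]
  exact (tailSup_le fun n hn => (hN n (hM.trans hn)).le).trans_lt (half_lt_self hε)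

variable [MeasurableSpace Ω] {μ : Measure Ω}

lemma measurable_tailSup (hF : ∀ n, Measurable (F n)) (hf : Measurable f) (N : ℕ) :
    Measurable (tailSup F f N) :=
  Measurable.iSup fun m => ((hF (N + m)).sub hf).abs

lemma tendsto_integral_tailSup [IsFiniteMeasure μ] (hF : ∀ n, Measurable (F n))
    (hf : Measurable f) (hFC : ∀ n ω, |F n ω - f ω| ≤ C)
    (hlim : ∀ᵐ ω ∂μ, Tendsto (fun n => F n ω) atTop (𝓝 (f ω))) :
    Tendsto (fun N => ∫ ω, tailSup F f N ω ∂μ) atTop (𝓝 0) := by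
  simpa using tendsto_integral_of_dominated_convergence (fun _ => C)
    (fun N => (measurable_tailSup hF hf N).aestronglyMeasurable) (integrable_const C)
    (fun N => Eventually.of_forall fun ω =>
      (Real.norm_of_nonneg tailSup_nonneg).trans_le (tailSup_le fun n _ => hFC n ω))
    (hlim.mono fun ω => tendsto_tailSup)

end TailSup

variable [MeasurableSpace Ω] {μ : Measure Ω}

lemma measurable_orbitAverage (hS : ∀ i, Measurable (S i)) (hf : Measurable f) (s : Finset ι) :
    Measurable (orbitAverage S s f) := by
  unfold orbitAverage
  simp only [Finset.expect_eq_sum_div_card]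
  exact (Finset.measurable_sum _ fun i _ => hf.comp (hS i)).div_const _

lemma integral_orbitAverage_le (hS : ∀ i, MeasurePreserving (S i) μ μ) (hf : Measurable f)
    (hfi : Integrable f μ) (hf0 : ∀ ω, 0 ≤ f ω) (s : Finset ι) :
    ∫ ω, orbitAverage S s f ω ∂μ ≤ ∫ ω, f ω ∂μ := by
  simp only [orbitAverage, Finset.expect_eq_sum_div_card, integral_div]
  have hcomp : ∀ i ∈ s, Integrable (fun ω => f (S i ω)) μ := fun i _ =>
    (hS i).integrable_comp_of_integrable hfi
  rw [integral_finsetSum s hcomp]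
  simp only [integral_comp_measurePreserving (hS _) hf, Finset.sum_const, nsmul_eq_mul]
  exact div_le_of_le_mul₀ (by positivity) (integral_nonneg hf0) (mul_comm _ _).le

/-- The pointwise ergodic theorem for the averages of bounded observables along the maps `S i` with
`i ∈ I n`, as `n → ∞`. No group law is imposed on `S`, so that the notion is stable under the
product construction `PointwiseErgodic.prod`. -/
def PointwiseErgodic (μ : Measure Ω) (S : ι → Ω → Ω) (I : ℕ → Finset ι) : Prop :=
  ∀ (f : Ω → ℝ) (C : ℝ), Measurable f → (∀ ω, |f ω| ≤ C) →
    ∀ᵐ ω ∂μ, ∃ a, Tendsto (fun n => orbitAverage S (I n) f ω) atTop (𝓝 a)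

lemma PointwiseErgodic.tendsto_limsup (h : PointwiseErgodic μ S I) (hf : Measurable f)
    (hfC : ∀ ω, |f ω| ≤ C) :
    ∀ᵐ ω ∂μ, Tendsto (fun n => orbitAverage S (I n) f ω) atTop
      (𝓝 (limsup (fun n => orbitAverage S (I n) f ω) atTop)) := by
  filter_upwards [h f C hf hfC] with ω ⟨a, ha⟩
  rwa [ha.limsup_eq]

lemma ae_forall_exists_lt_of_tendsto_integral_zero {h : ℕ → Ω → ℝ} (hh : ∀ N, Integrable (h N) μ)
    (hmeas : ∀ N, Measurable (h N)) (h0 : ∀ N ω, 0 ≤ h N ω)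
    (hlim : Tendsto (fun N => ∫ ω, h N ω ∂μ) atTop (𝓝 0)) :
    ∀ᵐ ω ∂μ, ∀ ε > 0, ∃ N, h N ω < ε := by
  have hbdd : ∀ ω, BddBelow (Set.range fun N => h N ω) := fun ω =>
    ⟨0, Set.forall_mem_range.2 fun N => h0 N ω⟩
  have hinf_nonneg : ∀ ω, 0 ≤ ⨅ N, h N ω := fun ω => le_ciInf fun N => h0 N ω
  have hinf : Integrable (fun ω => ⨅ N, h N ω) μ :=
    (hh 0).mono' (Measurable.iInf hmeas).aestronglyMeasurable <| Eventually.of_forall fun ω => by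
      rw [Real.norm_of_nonneg (hinf_nonneg ω)]
      exact ciInf_le (hbdd ω) 0
  have hzero : ∫ ω, ⨅ N, h N ω ∂μ = 0 :=
    (ge_of_tendsto' hlim fun N => integral_mono hinf (hh N) fun ω => ciInf_le (hbdd ω) N).antisymm
      (integral_nonneg hinf_nonneg)
  filter_upwards [(integral_eq_zero_iff_of_nonneg hinf_nonneg hinf).1 hzero] with ω hω ε hε
  exact exists_lt_of_ciInf_lt (lt_of_eq_of_lt hω hε)

variable [IsFiniteMeasure μ]

lemma PointwiseErgodic.integral_limsup_le (h : PointwiseErgodic μ S I)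
    (hS : ∀ i, MeasurePreserving (S i) μ μ) (hf : Measurable f) (hfC : ∀ ω, |f ω| ≤ C)
    (hf0 : ∀ ω, 0 ≤ f ω) :
    ∫ ω, limsup (fun n => orbitAverage S (I n) f ω) atTop ∂μ ≤ ∫ ω, f ω ∂μ := by
  have hlim := tendsto_integral_of_dominated_convergence (fun _ => C)
    (fun n => (measurable_orbitAverage (fun i => (hS i).measurable) hf
      (I n)).aestronglyMeasurable)
    (integrable_const C) (fun n => Eventually.of_forall (abs_orbitAverage_le hfC (I n)))
    (h.tendsto_limsup hf hfC)
  exact le_of_tendsto' hlim fun n =>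
    integral_orbitAverage_le hS hf (integrable_of_forall_abs_le hf hfC) hf0 (I n)

lemma PointwiseErgodic.ae_forall_exists_limsup_tailSup_lt {F : ℕ → Ω → ℝ}
    (h : PointwiseErgodic μ S I) (hS : ∀ i, MeasurePreserving (S i) μ μ)
    (hF : ∀ n, Measurable (F n)) (hf : Measurable f) (hFC : ∀ n ω, |F n ω - f ω| ≤ C)
    (hlim : ∀ᵐ ω ∂μ, Tendsto (fun n => F n ω) atTop (𝓝 (f ω))) :
    ∀ᵐ ω ∂μ, ∀ ε > 0, ∃ N,
      limsup (fun n => orbitAverage S (I n) (tailSup F f N) ω) atTop < ε := by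
  have htail : ∀ N ω, |tailSup F f N ω| ≤ C := fun N ω =>
    (abs_of_nonneg tailSup_nonneg).trans_le (tailSup_le fun n _ => hFC n ω)
  have hmeas : ∀ N, Measurable fun ω =>
      limsup (fun n => orbitAverage S (I n) (tailSup F f N) ω) atTop := fun N =>
    Measurable.limsup fun n =>
      measurable_orbitAverage (fun i => (hS i).measurable) (measurable_tailSup hF hf N) (I n)
  have hnonneg : ∀ N ω, 0 ≤ limsup (fun n => orbitAverage S (I n) (tailSup F f N) ω) atTop :=
    fun N ω => le_limsup_of_frequently_le
      (Frequently.of_forall fun n => orbitAverage_nonneg (fun _ => tailSup_nonneg) (I n) ω)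
      (isBoundedUnder_le_of_abs_le fun n => abs_orbitAverage_le (htail N) (I n) ω)
  refine ae_forall_exists_lt_of_tendsto_integral_zero
    (fun N => integrable_of_forall_abs_le (hmeas N) fun ω =>
      abs_limsup_le fun n => abs_orbitAverage_le (htail N) (I n) ω) hmeas hnonneg ?_
  exact squeeze_zero (fun N => integral_nonneg (hnonneg N))
    (fun N => h.integral_limsup_le hS (measurable_tailSup hF hf N) (htail N)
      fun _ => tailSup_nonneg)
    (tendsto_integral_tailSup hF hf hFC hlim)

/-- Maker's extension of the ergodic theorem to observables that converge almost everywhere. -/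
lemma PointwiseErgodic.ae_exists_tendsto_of_tendsto {F : ℕ → Ω → ℝ}
    (h : PointwiseErgodic μ S I) (hS : ∀ i, MeasurePreserving (S i) μ μ)
    (hF : ∀ n, Measurable (F n)) (hf : Measurable f) (hFC : ∀ n ω, |F n ω| ≤ C)
    (hfC : ∀ ω, |f ω| ≤ C) (hlim : ∀ᵐ ω ∂μ, Tendsto (fun n => F n ω) atTop (𝓝 (f ω))) :
    ∀ᵐ ω ∂μ, ∃ a, Tendsto (fun n => orbitAverage S (I n) (F n) ω) atTop (𝓝 a) := by
  have hdist : ∀ n ω, |F n ω - f ω| ≤ C + C := fun n ω =>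
    (abs_sub _ _).trans (add_le_add (hFC n ω) (hfC ω))
  have htail : ∀ N ω, |tailSup F f N ω| ≤ C + C := fun N ω =>
    (abs_of_nonneg tailSup_nonneg).trans_le (tailSup_le fun n _ => hdist n ω)
  filter_upwards [h f C hf hfC, h.ae_forall_exists_limsup_tailSup_lt hS hF hf hdist hlim]
    with ω ⟨a, ha⟩ hsmall
  refine ⟨a, Metric.tendsto_nhds.2 fun ε hε => ?_⟩
  obtain ⟨N, hN⟩ := hsmall (ε / 2) (half_pos hε)
  have htail_lt := eventually_lt_of_limsup_lt hN
    (isBoundedUnder_le_of_abs_le fun n => abs_orbitAverage_le (htail N) (I n) ω)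
  filter_upwards [htail_lt, Metric.tendsto_nhds.1 ha (ε / 2) (half_pos hε), eventually_ge_atTop N]
    with n hn_tail hn_f hNn
  have hn_F := abs_orbitAverage_sub_le (S := S)
    (fun ω => abs_sub_le_tailSup (fun m _ => hdist m ω) hNn) (I n) ω
  calc dist (orbitAverage S (I n) (F n) ω) a
      ≤ dist (orbitAverage S (I n) (F n) ω) (orbitAverage S (I n) f ω)
        + dist (orbitAverage S (I n) f ω) a := dist_triangle _ _ _
    _ < ε / 2 + ε / 2 := add_lt_add (hn_F.trans_lt hn_tail) hn_f
    _ = ε := add_halves ε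

lemma PointwiseErgodic.prod (h : PointwiseErgodic μ S I) (hS : ∀ i, MeasurePreserving (S i) μ μ)
    (h' : PointwiseErgodic μ T J) (hT : ∀ j, Measurable (T j)) :
    PointwiseErgodic μ (fun p : ι × κ => T p.2 ∘ S p.1) fun n => I n ×ˢ J n := by
  intro f C hf hfC
  simp only [orbitAverage_product]
  exact h.ae_exists_tendsto_of_tendsto hS (fun n => measurable_orbitAverage hT hf (J n))
    (Measurable.limsup fun n => measurable_orbitAverage hT hf (J n))
    (fun n => abs_orbitAverage_le hfC (J n))
    (fun ω => abs_limsup_le fun n => abs_orbitAverage_le hfC (J n) ω) (h'.tendsto_limsup hf hfC)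

end OrbitAverage

section BoxAverage

open scoped BigOperators

variable {Ω ι κ G : Type*} {f : Ω → ℝ} {C : ℝ}

lemma expect_Ico_neg (m : ℕ) (u : ℤ → ℝ) :
    𝔼 j ∈ Finset.Ico (-m : ℤ) m, u j
      = (𝔼 i ∈ Finset.range m, u i + 𝔼 i ∈ Finset.range m, u (-1 - i)) / 2 := by
  have hsum : ∑ j ∈ Finset.Ico (-m : ℤ) m, u j
      = ∑ i ∈ Finset.range m, u i + ∑ i ∈ Finset.range m, u (-1 - i) := by
    induction m with
    | zero => simp
    | succ m ih =>
      have hIco : Finset.Ico (-(m + 1 : ℕ) : ℤ) (m + 1 : ℕ)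
          = insert (-1 - m : ℤ) (insert (m : ℤ) (Finset.Ico (-m : ℤ) m)) := by
        ext x
        simp only [Finset.mem_Ico, Finset.mem_insert]
        push_cast
        lia
      rw [hIco, Finset.sum_insert (by simp only [Finset.mem_insert, Finset.mem_Ico]; lia),
        Finset.sum_insert (by simp), ih, Finset.sum_range_succ, Finset.sum_range_succ]
      ring
  have hcard : (Finset.Ico (-m : ℤ) m).card = 2 * m := by
    rw [Int.card_Ico]
    lia
  simp only [Finset.expect_eq_sum_div_card, hsum, hcard, Finset.card_range]
  push_cast
  ring

lemma abs_sum_sub_sum_le_of_subset {s u : Finset ι} {g : ι → ℝ} (hg : ∀ i, |g i| ≤ C)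
    (hsu : s ⊆ u) : |∑ i ∈ u, g i - ∑ i ∈ s, g i| ≤ C * (u.card - s.card) := by
  classical
  rw [← Finset.sum_sdiff_eq_sub hsu, ← Finset.cast_card_sdiff hsu, mul_comm, ← nsmul_eq_mul]
  exact (Finset.abs_sum_le_sum_abs _ _).trans (Finset.sum_le_card_nsmul _ _ _ fun i _ => hg i)

/-- The discrete box `[-m, m)^k`, of cardinality `(2m)^k`. -/
def zbox (k m : ℕ) : Finset (Fin k → ℤ) :=
  Fintype.piFinset fun _ => Finset.Ico (-m : ℤ) m

lemma mem_zbox {k m : ℕ} {x : Fin k → ℤ} : x ∈ zbox k m ↔ ∀ i, -(m : ℤ) ≤ x i ∧ x i < m := by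
  simp only [zbox, Fintype.mem_piFinset, Finset.mem_Ico]

lemma card_zbox (k m : ℕ) : (zbox k m).card = (2 * m) ^ k := by
  rw [zbox, Fintype.card_piFinset_const, Int.card_Ico]
  congr
  lia

lemma map_addRight_zbox_subset {k m r : ℕ} {z : Fin k → ℤ} (hz : ∀ i, (z i).natAbs ≤ r) :
    (zbox k m).map (addRightEmbedding z) ⊆ zbox k (m + r) := by
  simp only [Finset.subset_iff, Finset.mem_map, mem_zbox, addRightEmbedding_apply]
  rintro _ ⟨x, hx, rfl⟩ i
  have hxi := hx i
  have hzi := hz i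
  simp only [Pi.add_apply]
  push_cast
  lia

lemma zbox_mono {k : ℕ} : Monotone (zbox k) := fun m m' h =>
  Fintype.piFinset_subset _ _ fun _ => Finset.Ico_subset_Ico (by lia) (by lia)

/-- The average of `f` over the translates `x +ᵥ ω` with `x ∈ [-m, m)^k`. -/
abbrev zboxAverage (k m : ℕ) [AddAction (Fin k → ℤ) Ω] (f : Ω → ℝ) : Ω → ℝ :=
  orbitAverage (fun (x : Fin k → ℤ) ω => x +ᵥ ω) (zbox k m) f

lemma abs_zboxAverage_vadd_sub_le {k r : ℕ} [AddAction (Fin k → ℤ) Ω] (hfC : ∀ ω, |f ω| ≤ C)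
    {z : Fin k → ℤ} (hz : ∀ i, (z i).natAbs ≤ r) (m : ℕ) (ω : Ω) :
    |zboxAverage k m f (z +ᵥ ω) - zboxAverage k m f ω|
      ≤ 2 * C * ((zbox k (m + r)).card - (zbox k m).card) / (zbox k m).card := by
  have hbound : ∀ x : Fin k → ℤ, |f (x +ᵥ ω)| ≤ C := fun x => hfC _
  have hshift := abs_sum_sub_sum_le_of_subset hbound (map_addRight_zbox_subset (m := m) hz)
  have hself := abs_sum_sub_sum_le_of_subset hbound (zbox_mono (k := k) (m.le_add_right r))
  simp only [Finset.sum_map, Finset.card_map, addRightEmbedding_apply, add_vadd] at hshift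
  simp only [orbitAverage, Finset.expect_eq_sum_div_card]
  rw [← sub_div, abs_div, Nat.abs_cast]
  gcongr
  rw [abs_le] at hshift hself ⊢
  constructor <;> linarith

lemma tendsto_card_zbox_add_div (k r : ℕ) :
    Tendsto (fun m => ((zbox k (m + r)).card - (zbox k m).card : ℝ) / (zbox k m).card) atTop
      (𝓝 0) := by
  have hratio := ((tendsto_add_mul_div_add_mul_atTop_nhds (2 * r : ℝ) 0 2
    two_ne_zero).pow k).sub_const 1
  rw [div_self two_ne_zero, one_pow, sub_self] at hratio
  refine hratio.congr' ?_
  filter_upwards [eventually_ne_atTop 0] with m hm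
  have hm' : ((2 * m : ℝ)) ^ k ≠ 0 := by positivity
  rw [card_zbox, card_zbox]
  push_cast
  rw [sub_div, div_self hm', zero_add, div_pow, mul_add, add_comm]

lemma tendsto_zboxAverage_vadd_sub {k : ℕ} [AddAction (Fin k → ℤ) Ω]
    (hfC : ∀ ω, |f ω| ≤ C) (z : Fin k → ℤ) (ω : Ω) :
    Tendsto (fun m => zboxAverage k m f (z +ᵥ ω) - zboxAverage k m f ω) atTop (𝓝 0) := by
  have hz : ∀ i, (z i).natAbs ≤ Finset.univ.sup fun i => (z i).natAbs := fun i =>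
    Finset.le_sup (f := fun i => (z i).natAbs) (Finset.mem_univ i)
  refine squeeze_zero_norm (fun m => abs_zboxAverage_vadd_sub_le hfC hz m ω) ?_
  simpa only [mul_div_assoc, mul_zero] using (tendsto_card_zbox_add_div k _).const_mul (2 * C)

variable [MeasurableSpace Ω] {μ : Measure Ω}

lemma PointwiseErgodic.of_equiv {S : ι → Ω → Ω} {T : κ → Ω → Ω} {I : ℕ → Finset ι}
    {J : ℕ → Finset κ} (h : PointwiseErgodic μ S I) (e : ι ≃ κ)
    (hIJ : ∀ n i, i ∈ I n ↔ e i ∈ J n) (hST : ∀ i, S i = T (e i)) : PointwiseErgodic μ T J := by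
  intro f C hf hfC
  have hav : ∀ n ω, orbitAverage S (I n) f ω = orbitAverage T (J n) f ω := fun n ω =>
    Finset.expect_equiv e (hIJ n) fun i _ => by rw [hST]
  simpa only [hav] using h f C hf hfC

lemma ergodicVAdd_of_forall_invariant [AddGroup G] [Countable G] [AddAction G Ω]
    [MeasurableConstVAdd G Ω] [VAddInvariantMeasure G Ω μ]
    (h : ∀ s, MeasurableSet s → (∀ g : G, (g +ᵥ ·) ⁻¹' s = s) → EventuallyConst s (ae μ)) :
    ErgodicVAdd G Ω μ := by
  refine ⟨fun {s} hs hinv => ?_⟩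
  have hae : (⋂ g : G, (g +ᵥ ·) ⁻¹' s) =ᵐ[μ] s := by
    simpa only [Set.iInter_const] using Filter.EventuallyEq.countable_iInter hinv
  refine (h _ (.iInter fun g => measurable_const_vadd g hs) fun g => ?_).congr hae
  ext ω
  simp only [Set.mem_preimage, Set.mem_iInter, vadd_vadd]
  exact (Equiv.addRight g).forall_congr_right (q := fun i => i +ᵥ ω ∈ s)

variable [IsFiniteMeasure μ]

lemma pointwiseErgodic_iterate {T : Ω → Ω} (hT : MeasurePreserving T μ μ) :
    PointwiseErgodic μ (fun i => T^[i]) Finset.range := by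
  intro f C hf hfC
  simpa only [birkhoffAverage, birkhoffSum, orbitAverage, Finset.expect_eq_sum_div_card,
    Finset.card_range, smul_eq_mul, div_eq_inv_mul]
    using ae_exists_tendsto_birkhoffAverage hT hf hfC

section Action

variable [AddCommGroup G] [AddAction G Ω] [MeasurableConstVAdd G Ω] [VAddInvariantMeasure G Ω μ]

lemma pointwiseErgodic_zsmul_vadd (v : G) :
    PointwiseErgodic μ (fun (j : ℤ) ω => j • v +ᵥ ω) fun m => Finset.Ico (-m : ℤ) m := by
  intro f C hf hfC
  have hforward := pointwiseErgodic_iterate (measurePreserving_vadd v μ) f C hf hfC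
  have hbackward := pointwiseErgodic_iterate (measurePreserving_vadd (-v) μ)
    (fun ω => f (-v +ᵥ ω)) C (hf.comp (measurable_const_vadd (-v))) fun ω => hfC _
  filter_upwards [hforward, hbackward] with ω ⟨a, ha⟩ ⟨b, hb⟩
  refine ⟨(a + b) / 2, ((ha.add hb).div_const 2).congr fun m => ?_⟩
  have hneg : ∀ i : ℕ, (-1 - i : ℤ) • v = -v + i • -v := fun i => by
    rw [sub_smul, neg_one_smul, natCast_zsmul, smul_neg, sub_eq_add_neg]
  simp only [orbitAverage, expect_Ico_neg, vadd_iterate, vadd_vadd, natCast_zsmul, hneg]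

theorem pointwiseErgodic_zbox {k : ℕ} (v : Fin k → G) :
    PointwiseErgodic μ (fun (x : Fin k → ℤ) ω => (∑ i, x i • v i) +ᵥ ω) (zbox k) := by
  induction k with
  | zero =>
    intro f C _ _
    simp only [zbox, Fintype.piFinset_of_isEmpty]
    exact Eventually.of_forall fun ω => ⟨_, tendsto_const_nhds⟩
  | succ k ih =>
    refine ((pointwiseErgodic_zsmul_vadd (v 0)).prod
      (fun j => measurePreserving_vadd (j • v 0) μ) (ih fun i => v i.succ)
      fun x => measurable_const_vadd _).of_equiv (Fin.consEquiv fun _ => ℤ) ?_ ?_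
    · rintro n ⟨j, x⟩
      simp [mem_zbox, Fin.forall_fin_succ]
    · rintro ⟨j, x⟩
      funext ω
      simp [Fin.sum_univ_succ, vadd_vadd, add_comm]

end Action

theorem exists_ae_tendsto_zboxAverage {k : ℕ} [AddAction (Fin k → ℤ) Ω]
    [MeasurableConstVAdd (Fin k → ℤ) Ω] [ErgodicVAdd (Fin k → ℤ) Ω μ] (hf : Measurable f)
    (hfC : ∀ ω, |f ω| ≤ C) :
    ∃ c, ∀ᵐ ω ∂μ, Tendsto (fun m => zboxAverage k m f ω) atTop (𝓝 c) := by
  have hergodic : PointwiseErgodic μ (fun (x : Fin k → ℤ) ω => x +ᵥ ω) (zbox k) := by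
    simpa only [← pi_eq_sum_univ'] using
      pointwiseErgodic_zbox (μ := μ) fun i : Fin k => (Pi.single i 1 : Fin k → ℤ)
  have hmeas : Measurable fun ω => limsup (zboxAverage k · f ω) atTop := Measurable.limsup fun m =>
    measurable_orbitAverage measurable_const_vadd hf _
  have hinv : ∀ (z : Fin k → ℤ) ω,
      limsup (zboxAverage k · f (z +ᵥ ω)) atTop = limsup (zboxAverage k · f ω) atTop := fun z ω =>
    limsup_eq_of_tendsto_sub_zero (fun m => abs_orbitAverage_le hfC _ _)
      (fun m => abs_orbitAverage_le hfC _ _) (tendsto_zboxAverage_vadd_sub hfC z ω)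
  obtain ⟨c, hc⟩ := exists_eventuallyEq_const_of_forall_separating (l := ae μ)
    (f := fun ω => limsup (zboxAverage k · f ω) atTop) MeasurableSet fun U hU =>
      eventuallyConst_set.1 <| aeconst_of_forall_preimage_vadd_ae_eq (Fin k → ℤ)
        (hmeas hU).nullMeasurableSet fun z => .of_eq <|
          congrArg (· ⁻¹' U) (funext (hinv z))
  refine ⟨c, ?_⟩
  filter_upwards [hergodic.tendsto_limsup hf hfC, hc] with ω hlim hω
  rwa [show limsup (zboxAverage k · f ω) atTop = c from hω] at hlim

end BoxAverage

section SupportRank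

variable {R M N α β : Type*} [CommRing R] [AddCommGroup M] [Module R M] [AddCommGroup N]
  [Module R N]

lemma moduleFinite_supported {s : Set α} (hs : s.Finite) :
    Module.Finite R (Finsupp.supported R R s) :=
  have := hs.fintype
  .equiv (Finsupp.supportedEquivFinsupp (M := R) (R := R) s).symm

lemma map_supported_le_iff (φ : (α →₀ R) →ₗ[R] N) (s : Set α) (V : Submodule R N) :
    (Finsupp.supported R R s).map φ ≤ V ↔ ∀ i ∈ s, φ (Finsupp.single i 1) ∈ V := by
  rw [Finsupp.supported_eq_span_single, Submodule.map_span_le, Set.forall_mem_image]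

variable [IsDomain R]

lemma finrank_map_add_finrank_inf_ker (V : Submodule R M) [Module.Finite R V] (φ : M →ₗ[R] N) :
    Module.finrank R (V.map φ) + Module.finrank R ↥(V ⊓ LinearMap.ker φ)
      = Module.finrank R V := by
  rw [← (LinearMap.ker (φ.domRestrict V)).finrank_quotient_add_finrank,
    (φ.domRestrict V).quotKerEquivRange.finrank_eq, LinearMap.range_domRestrict,
    LinearMap.ker_domRestrict, ← Submodule.finrank_map_subtype_eq, Submodule.map_comap_subtype]

lemma finrank_supported {s : Set α} (hs : s.Finite) :
    Module.finrank R (Finsupp.supported R R s) = s.ncard := by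
  have := hs.fintype
  rw [(Finsupp.supportedEquivFinsupp (M := R) (R := R) s).finrank_eq,
    Module.finrank_finsupp_self, Set.ncard_eq_toFinset_card', Set.toFinset_card]

lemma finrank_map_supported_le (φ : (α →₀ R) →ₗ[R] N) {s : Set α} (hs : s.Finite) :
    Module.finrank R ((Finsupp.supported R R s).map φ) ≤ s.ncard := by
  have := moduleFinite_supported (R := R) hs
  exact (Submodule.finrank_map_le φ _).trans (finrank_supported hs).le

lemma finrank_map_supported_mono (φ : (α →₀ R) →ₗ[R] N) {s t : Set α} (ht : t.Finite)
    (hst : s ⊆ t) :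
    Module.finrank R ((Finsupp.supported R R s).map φ)
      ≤ Module.finrank R ((Finsupp.supported R R t).map φ) := by
  have := moduleFinite_supported (R := R) ht
  exact Submodule.finrank_mono (Submodule.map_mono (Finsupp.supported_mono hst))

variable [IsNoetherianRing R]

lemma finrank_sup_add_finrank_inf (V W : Submodule R M) [Module.Finite R V] [Module.Finite R W] :
    Module.finrank R ↥(V ⊔ W) + Module.finrank R ↥(V ⊓ W)
      = Module.finrank R V + Module.finrank R W := by
  have : Module.Finite R ↥(V ⊓ W) :=
    Module.Finite.of_injective (Submodule.inclusion (inf_le_left : V ⊓ W ≤ V))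
      (Submodule.inclusion_injective _)
  have hrank := Submodule.rank_sup_add_rank_inf_eq V W
  simp only [← Module.finrank_eq_rank] at hrank
  exact_mod_cast hrank

lemma finrank_map_supported_union_add (φ : (α →₀ R) →ₗ[R] N) {s t : Set α} (hs : s.Finite)
    (ht : t.Finite) :
    Module.finrank R ((Finsupp.supported R R (s ∪ t)).map φ) + Module.finrank R
        ↥((Finsupp.supported R R s).map φ ⊓ (Finsupp.supported R R t).map φ)
      = Module.finrank R ((Finsupp.supported R R s).map φ)
        + Module.finrank R ((Finsupp.supported R R t).map φ) := by
  have := moduleFinite_supported (R := R) hs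
  have := moduleFinite_supported (R := R) ht
  rw [Finsupp.supported_union, Submodule.map_sup, finrank_sup_add_finrank_inf]

lemma finrank_map_supported_le_add_ncard_sdiff (φ : (α →₀ R) →ₗ[R] N) {s t : Set α}
    (ht : t.Finite) (hst : s ⊆ t) :
    Module.finrank R ((Finsupp.supported R R t).map φ)
      ≤ Module.finrank R ((Finsupp.supported R R s).map φ) + (t \ s).ncard := by
  have hunion := finrank_map_supported_union_add φ (ht.subset hst) (ht.sdiff (t := s))
  have hle := finrank_map_supported_le φ (ht.sdiff (t := s))
  rw [Set.union_sdiff_cancel hst] at hunion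
  lia

lemma finrank_map_supported_union (φ : (α →₀ R) →ₗ[R] (β →₀ R)) {s t : Set α} {s' t' : Set β}
    (hs : s.Finite) (ht : t.Finite)
    (hs' : (Finsupp.supported R R s).map φ ≤ Finsupp.supported R R s')
    (ht' : (Finsupp.supported R R t).map φ ≤ Finsupp.supported R R t') (hdisj : Disjoint s' t') :
    Module.finrank R ((Finsupp.supported R R (s ∪ t)).map φ)
      = Module.finrank R ((Finsupp.supported R R s).map φ)
        + Module.finrank R ((Finsupp.supported R R t).map φ) := by
  rw [← finrank_map_supported_union_add φ hs ht,
    ((Finsupp.disjoint_supported_supported hdisj).mono hs' ht').eq_bot, finrank_bot, add_zero]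

end SupportRank

section Boundary

variable {d : ℕ} {R Q : ElemCube d} {A : Set (ElemCube d)} {k : ℕ}

lemma boundaryHom_single_one (Q : ElemCube d) :
    boundaryHom d (Finsupp.single Q 1) = boundaryCube d Q := by
  simp [boundaryHom]

/-- The cubical product of the elementary interval encoded by `a` with chains in `ℝ^d`. -/
def consChain (a : ℤ × Bool) : CubChain d →ₗ[ℤ] CubChain (d + 1) :=
  Finsupp.lmapDomain ℤ ℤ fun P => (Fin.cons a P : ElemCube (d + 1))

lemma consChain_single_one (a : ℤ × Bool) (P : ElemCube d) :
    consChain a (Finsupp.single P 1) = Finsupp.single (Fin.cons a P : ElemCube (d + 1)) 1 := by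
  simp [consChain]

lemma boundaryHom_consChain (a : ℤ × Bool) (c : CubChain d) :
    boundaryHom (d + 1) (consChain a c)
      = (if a.2 then consChain (a.1 + 1, false) c - consChain (a.1, false) c else 0)
        + (if a.2 then (-1 : ℤ) else 1) • consChain a (boundaryHom d c) := by
  induction c using Finsupp.induction_linear with
  | zero => simp
  | add c c' hc hc' =>
    simp only [map_add, hc, hc', smul_add]
    split_ifs <;> abel
  | single P n =>
    rw [← mul_one n, ← smul_eq_mul, ← Finsupp.smul_single]
    simp only [map_smul, consChain_single_one, boundaryHom_single_one, ← smul_sub]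
    rw [smul_comm _ n, ← smul_ite_zero, ← smul_add]
    rfl

lemma exists_eq_cons (Q : ElemCube (d + 1)) : ∃ a P, Q = (Fin.cons a P : ElemCube (d + 1)) :=
  ⟨Q 0, Fin.tail Q, (Fin.cons_self_tail Q).symm⟩

lemma cubChain_hom_ext {M : Type*} [AddCommGroup M] {φ ψ : CubChain (d + 1) →ₗ[ℤ] M}
    (h : ∀ a, φ ∘ₗ consChain a = ψ ∘ₗ consChain a) : φ = ψ := by
  refine Finsupp.lhom_ext' fun Q => LinearMap.ext_ring ?_
  obtain ⟨a, P, rfl⟩ := exists_eq_cons Q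
  simpa only [LinearMap.comp_apply, Finsupp.lsingle_apply, consChain_single_one] using
    LinearMap.congr_fun (h a) (Finsupp.single P 1)

lemma boundaryHom_comp_self (d : ℕ) : boundaryHom d ∘ₗ boundaryHom d = 0 := by
  induction d with
  | zero =>
    refine Finsupp.lhom_ext' fun Q => LinearMap.ext_ring ?_
    simp [boundaryHom_single_one, boundaryCube]
  | succ d ih =>
    refine cubChain_hom_ext fun a => LinearMap.ext fun c => ?_
    have hc : boundaryHom d (boundaryHom d c) = 0 := LinearMap.congr_fun ih c
    by_cases ha : a.2 <;> simp [boundaryHom_consChain, ha, hc]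

/-- `R` is a face of `Q` of codimension one. -/
def IsFacet (R Q : ElemCube d) : Prop :=
  cubeDim R + 1 = cubeDim Q ∧ cubeSet R ⊆ cubeSet Q

lemma mem_cubeSet_cons (a : ℤ × Bool) (P : ElemCube d) (x : Fin (d + 1) → ℝ) :
    x ∈ cubeSet (Fin.cons a P : ElemCube (d + 1)) ↔
      x 0 ∈ Set.Icc (a.1 : ℝ) (a.1 + if a.2 then 1 else 0) ∧ Fin.tail x ∈ cubeSet P :=
  Fin.forall_fin_succ

lemma cubeDim_cons (a : ℤ × Bool) (P : ElemCube d) :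
    cubeDim (Fin.cons a P : ElemCube (d + 1)) = (if a.2 then 1 else 0) + cubeDim P := by
  simp only [cubeDim, Fin.card_filter_univ_succ, Fin.cons_zero, Fin.cons_succ]
  split_ifs <;> lia

lemma IsFacet.cons (h : IsFacet R Q) (a : ℤ × Bool) :
    IsFacet (Fin.cons a R : ElemCube (d + 1)) (Fin.cons a Q) := by
  refine ⟨by rw [cubeDim_cons, cubeDim_cons, ← h.1, add_assoc], fun x hx => ?_⟩
  rw [mem_cubeSet_cons] at hx ⊢
  exact ⟨hx.1, h.2 hx.2⟩

lemma isFacet_cons_endpoint {l m : ℤ} (hm : m ∈ Set.Icc l (l + 1)) (Q : ElemCube d) :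
    IsFacet (Fin.cons (m, false) Q : ElemCube (d + 1)) (Fin.cons (l, true) Q) := by
  refine ⟨by simp [cubeDim_cons, add_comm], fun x hx => ?_⟩
  have hl : (l : ℝ) ≤ m := mod_cast hm.1
  have hr : (m : ℝ) ≤ l + 1 := mod_cast hm.2
  simp only [mem_cubeSet_cons, Set.mem_Icc, if_true, Bool.false_eq_true, if_false, add_zero]
    at hx ⊢
  exact ⟨⟨hl.trans hx.1.1, hx.1.2.trans hr⟩, hx.2⟩

lemma boundaryCube_mem_supported (Q : ElemCube d) :
    boundaryCube d Q ∈ Finsupp.supported ℤ ℤ {R | IsFacet R Q} := by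
  induction d with
  | zero => exact Submodule.zero_mem _
  | succ d ih =>
    obtain ⟨a, P, rfl⟩ := exists_eq_cons Q
    rw [← boundaryHom_single_one, ← consChain_single_one, boundaryHom_consChain,
      boundaryHom_single_one]
    refine Submodule.add_mem _ ?_ (Submodule.smul_mem _ _ ?_)
    · rcases a with ⟨l, _ | _⟩
      · exact Submodule.zero_mem _
      · simp only [if_true, consChain_single_one]
        exact Submodule.sub_mem _
          (Finsupp.single_mem_supported _ _ (isFacet_cons_endpoint (by simp) P))
          (Finsupp.single_mem_supported _ _ (isFacet_cons_endpoint (by simp) P))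
    · have hmap : consChain a (boundaryCube d P)
          ∈ Finsupp.supported ℤ ℤ (Fin.cons a '' {R | IsFacet R P}) := by
        rw [← Finsupp.lmapDomain_supported]
        exact Submodule.mem_map_of_mem (ih P)
      exact Finsupp.supported_mono (Set.image_subset_iff.2 fun R hR => hR.cons a) hmap

/-- `A` contains every face of each of its cubes, so that it spans a subcomplex. -/
def FaceClosed (A : Set (ElemCube d)) : Prop :=
  ∀ ⦃Q⦄, Q ∈ A → ∀ ⦃R⦄, cubeSet R ⊆ cubeSet Q → R ∈ A

/-- The `k`-dimensional cubes of `A`. -/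
def cells (k : ℕ) (A : Set (ElemCube d)) : Set (ElemCube d) :=
  {Q | cubeDim Q = k ∧ Q ∈ A}

lemma cells_subset (k : ℕ) (A : Set (ElemCube d)) : cells k A ⊆ A := fun _ hQ => hQ.2

lemma cells_mono {A B : Set (ElemCube d)} (h : A ⊆ B) : cells k A ⊆ cells k B :=
  fun _ hQ => ⟨hQ.1, h hQ.2⟩

lemma cells_sdiff (k : ℕ) (A B : Set (ElemCube d)) : cells k A \ cells k B ⊆ A \ B :=
  fun _ hQ => ⟨hQ.1.2, fun hB => hQ.2 ⟨hQ.1.1, hB⟩⟩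

lemma cells_union (k : ℕ) (A B : Set (ElemCube d)) :
    cells k (A ∪ B) = cells k A ∪ cells k B :=
  Set.ext fun _ => and_or_left

lemma map_boundaryHom_cells_succ_le (hA : FaceClosed A) (k : ℕ) :
    (Finsupp.supported ℤ ℤ (cells (k + 1) A)).map (boundaryHom d)
      ≤ Finsupp.supported ℤ ℤ (cells k A) := by
  refine (map_supported_le_iff _ _ _).2 fun Q hQ => ?_
  rw [boundaryHom_single_one]
  refine Finsupp.supported_mono (fun R hR => ?_) (boundaryCube_mem_supported Q)
  exact ⟨Nat.succ_injective (hR.1.trans hQ.1), hA hQ.2 hR.2⟩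

lemma map_boundaryHom_cells_le (hA : FaceClosed A) (k : ℕ) :
    (Finsupp.supported ℤ ℤ (cells k A)).map (boundaryHom d) ≤ Finsupp.supported ℤ ℤ A := by
  refine (map_supported_le_iff _ _ _).2 fun Q hQ => ?_
  rw [boundaryHom_single_one]
  exact Finsupp.supported_mono (fun R hR => hA hQ.2 hR.2) (boundaryCube_mem_supported Q)

end Boundary

section CellBetti

variable {d k q : ℕ} {A B : Set (ElemCube d)}

lemma FaceClosed.inter (hA : FaceClosed A) (hB : FaceClosed B) : FaceClosed (A ∩ B) :=
  fun _ hQ _ hR => ⟨hA hQ.1 hR, hB hQ.2 hR⟩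

lemma FaceClosed.union (hA : FaceClosed A) (hB : FaceClosed B) : FaceClosed (A ∪ B) :=
  fun _ hQ _ hR => hQ.imp (hA · hR) (hB · hR)

lemma faceClosed_empty : FaceClosed (∅ : Set (ElemCube d)) := fun _ hQ => hQ.elim

lemma faceClosed_biUnion {ι : Type*} {s : Finset ι} {A : ι → Set (ElemCube d)}
    (hA : ∀ i ∈ s, FaceClosed (A i)) : FaceClosed (⋃ i ∈ s, A i) := by
  intro Q hQ R hR
  simp only [Set.mem_iUnion₂] at hQ ⊢
  obtain ⟨i, hi, hQi⟩ := hQ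
  exact ⟨i, hi, hA i hi hQi hR⟩

/-- The elementary cubes contained in `X`. -/
def cubesIn (X : Set (Fin d → ℝ)) : Set (ElemCube d) := {Q | cubeSet Q ⊆ X}

lemma faceClosed_cubesIn (X : Set (Fin d → ℝ)) : FaceClosed (cubesIn X) :=
  fun _ hQ _ hR => hR.trans hQ

lemma cubesIn_inter (X Y : Set (Fin d → ℝ)) : cubesIn (X ∩ Y) = cubesIn X ∩ cubesIn Y :=
  Set.ext fun _ => Set.subset_inter_iff

/-- The `q`-th Betti number of the chain complex spanned by the cubes in `A`; it is meaningful when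
`A` is face closed. -/
def cellBetti (q : ℕ) (A : Set (ElemCube d)) : ℕ :=
  Module.finrank ℤ (↥(Finsupp.supported ℤ ℤ (cells q A) ⊓ LinearMap.ker (boundaryHom d)) ⧸
    ((Finsupp.supported ℤ ℤ (cells (q + 1) A)).map (boundaryHom d)).comap
      (Finsupp.supported ℤ ℤ (cells q A) ⊓ LinearMap.ker (boundaryHom d)).subtype)

lemma betti_eq_cellBetti_cubesIn (q : ℕ) (X : Set (Fin d → ℝ)) :
    betti d q X = cellBetti q (cubesIn X) := rfl

/-- The rank of the boundary operator on the `k`-chains spanned by `A`. -/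
def boundaryRank (k : ℕ) (A : Set (ElemCube d)) : ℕ :=
  Module.finrank ℤ ((Finsupp.supported ℤ ℤ (cells k A)).map (boundaryHom d))

lemma cellBetti_add_boundaryRank_add_boundaryRank (hfin : A.Finite) (hA : FaceClosed A) (q : ℕ) :
    cellBetti q A + boundaryRank q A + boundaryRank (q + 1) A = (cells q A).ncard := by
  set V := Finsupp.supported ℤ ℤ (cells q A)
  set B := (Finsupp.supported ℤ ℤ (cells (q + 1) A)).map (boundaryHom d) with hB
  have hcells := hfin.subset (cells_subset q A)
  have : Module.Finite ℤ V := moduleFinite_supported hcells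
  have : Module.Finite ℤ ↥(V ⊓ LinearMap.ker (boundaryHom d)) :=
    Module.Finite.of_injective (Submodule.inclusion inf_le_left) (Submodule.inclusion_injective _)
  have hker : B ≤ V ⊓ LinearMap.ker (boundaryHom d) := by
    refine le_inf (map_boundaryHom_cells_succ_le hA q) (LinearMap.le_ker_iff_map.2 ?_)
    rw [hB, ← Submodule.map_comp, boundaryHom_comp_self, Submodule.map_zero]
  have hquot := (B.comap (V ⊓ LinearMap.ker (boundaryHom d)).subtype).finrank_quotient_add_finrank
  rw [(Submodule.comapSubtypeEquivOfLe hker).finrank_eq] at hquot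
  have hnullity := finrank_map_add_finrank_inf_ker V (boundaryHom d)
  rw [← hquot, finrank_supported hcells] at hnullity
  rw [← hnullity, cellBetti, boundaryRank, boundaryRank]
  lia

lemma cellBetti_le_ncard (hfin : A.Finite) (hA : FaceClosed A) : cellBetti q A ≤ A.ncard := by
  have hformula := cellBetti_add_boundaryRank_add_boundaryRank hfin hA q
  have hcells := Set.ncard_le_ncard (cells_subset q A) hfin
  lia

lemma cellBetti_empty : cellBetti q (∅ : Set (ElemCube d)) = 0 :=
  Nat.eq_zero_of_le_zero <|
    (cellBetti_le_ncard Set.finite_empty faceClosed_empty).trans_eq (Set.ncard_empty _)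

lemma abs_cellBetti_sub_le (hB : B.Finite) (hAB : A ⊆ B) (hfA : FaceClosed A)
    (hfB : FaceClosed B) :
    |(cellBetti q B : ℝ) - cellBetti q A| ≤ (B \ A).ncard := by
  have hformulaA := cellBetti_add_boundaryRank_add_boundaryRank (hB.subset hAB) hfA q
  have hformulaB := cellBetti_add_boundaryRank_add_boundaryRank hB hfB q
  have hcells : ∀ k, (cells k B \ cells k A).ncard ≤ (B \ A).ncard := fun k =>
    Set.ncard_le_ncard (cells_sdiff k B A) hB.sdiff
  have hfin : ∀ k, (cells k B).Finite := fun k => hB.subset (cells_subset k B)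
  have hmono : ∀ k, boundaryRank k A ≤ boundaryRank k B := fun k =>
    finrank_map_supported_mono _ (hfin k) (cells_mono hAB)
  have hgrowth : ∀ k, boundaryRank k B ≤ boundaryRank k A + (cells k B \ cells k A).ncard :=
    fun k => finrank_map_supported_le_add_ncard_sdiff _ (hfin k) (cells_mono hAB)
  have hcard := Set.ncard_sdiff_add_ncard_of_subset (cells_mono (k := q) hAB) (hfin q)
  have hq := hcells q
  have hq' := hcells (q + 1)
  have hmono_q := hmono q
  have hmono_q' := hmono (q + 1)
  have hgrowth_q := hgrowth q
  have hgrowth_q' := hgrowth (q + 1)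
  rw [abs_sub_le_iff, sub_le_iff_le_add, sub_le_iff_le_add]
  norm_cast
  constructor <;> lia

lemma boundaryRank_union (hA : A.Finite) (hB : B.Finite) (hfA : FaceClosed A)
    (hfB : FaceClosed B) (hAB : Disjoint A B) :
    boundaryRank k (A ∪ B) = boundaryRank k A + boundaryRank k B := by
  rw [boundaryRank, cells_union]
  exact finrank_map_supported_union _ (hA.subset (cells_subset k A))
    (hB.subset (cells_subset k B)) (map_boundaryHom_cells_le hfA k)
    (map_boundaryHom_cells_le hfB k) hAB

lemma cellBetti_union (hA : A.Finite) (hB : B.Finite) (hfA : FaceClosed A)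
    (hfB : FaceClosed B) (hAB : Disjoint A B) :
    cellBetti q (A ∪ B) = cellBetti q A + cellBetti q B := by
  have hunion := cellBetti_add_boundaryRank_add_boundaryRank (hA.union hB) (hfA.union hfB) q
  have hcells : (cells q (A ∪ B)).ncard = (cells q A).ncard + (cells q B).ncard := by
    rw [cells_union, Set.ncard_union_eq (hAB.mono (cells_subset q A) (cells_subset q B))
      (hA.subset (cells_subset q A)) (hB.subset (cells_subset q B))]
  rw [boundaryRank_union hA hB hfA hfB hAB, boundaryRank_union hA hB hfA hfB hAB, hcells,
    ← cellBetti_add_boundaryRank_add_boundaryRank hA hfA q,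
    ← cellBetti_add_boundaryRank_add_boundaryRank hB hfB q] at hunion
  lia

lemma cellBetti_biUnion {ι : Type*} (s : Finset ι) {A : ι → Set (ElemCube d)}
    (hA : ∀ i ∈ s, (A i).Finite) (hfA : ∀ i ∈ s, FaceClosed (A i))
    (hdisj : (s : Set ι).PairwiseDisjoint A) :
    cellBetti q (⋃ i ∈ s, A i) = ∑ i ∈ s, cellBetti q (A i) := by
  classical
  induction s using Finset.induction_on with
  | empty => simpa using cellBetti_empty
  | insert a s ha ih =>
    rw [Finset.forall_mem_insert] at hA hfA
    rw [Finset.coe_insert, Set.pairwiseDisjoint_insert_of_notMem (by simpa using ha)] at hdisj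
    rw [Finset.set_biUnion_insert, Finset.sum_insert ha, ← ih hA.2 hfA.2 hdisj.1]
    exact cellBetti_union hA.1 (s.finite_toSet.biUnion hA.2) hfA.1 (faceClosed_biUnion hfA.2)
      (Set.disjoint_iUnion₂_right.2 hdisj.2)

end CellBetti

section Translation

variable {d : ℕ} {A : Set (ElemCube d)}

lemma translateCube_cons (x : Fin (d + 1) → ℤ) (a : ℤ × Bool) (P : ElemCube d) :
    translateCube x (Fin.cons a P : ElemCube (d + 1))
      = Fin.cons (a.1 + x 0, a.2) (translateCube (Fin.tail x) P) := by
  funext i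
  refine Fin.cases ?_ (fun i => ?_) i <;> simp [translateCube, Fin.tail]

lemma translateCube_zero (Q : ElemCube d) : translateCube 0 Q = Q := by
  funext i
  simp [translateCube]

lemma translateCube_translateCube (x y : Fin d → ℤ) (Q : ElemCube d) :
    translateCube x (translateCube y Q) = translateCube (x + y) Q := by
  funext i
  simp [translateCube, add_assoc, add_comm (x i)]

lemma translateCube_neg_translateCube (x : Fin d → ℤ) (Q : ElemCube d) :
    translateCube (-x) (translateCube x Q) = Q := by
  rw [translateCube_translateCube, neg_add_cancel, translateCube_zero]

lemma translateCube_translateCube_neg (x : Fin d → ℤ) (Q : ElemCube d) :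
    translateCube x (translateCube (-x) Q) = Q := by
  rw [translateCube_translateCube, add_neg_cancel, translateCube_zero]

lemma translateCube_injective (x : Fin d → ℤ) : Function.Injective (translateCube x) :=
  Function.LeftInverse.injective (translateCube_neg_translateCube x)

lemma translateCube_surjective (x : Fin d → ℤ) : Function.Surjective (translateCube x) :=
  Function.RightInverse.surjective (translateCube_translateCube_neg x)

lemma mem_cubeSet_translateCube (x : Fin d → ℤ) (Q : ElemCube d) (y : Fin d → ℝ) :
    y ∈ cubeSet (translateCube x Q) ↔ (fun i => y i - x i) ∈ cubeSet Q := by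
  refine forall_congr' fun i => ?_
  simp only [translateCube, Set.mem_Icc, le_sub_iff_add_le, sub_le_iff_le_add]
  push_cast
  rw [add_right_comm]
  rfl

lemma cubeSet_translateCube_subset (x : Fin d → ℤ) {R Q : ElemCube d}
    (h : cubeSet R ⊆ cubeSet Q) : cubeSet (translateCube x R) ⊆ cubeSet (translateCube x Q) := by
  intro y hy
  rw [mem_cubeSet_translateCube] at hy ⊢
  exact h hy

lemma FaceClosed.preimage_translateCube (hA : FaceClosed A) (x : Fin d → ℤ) :
    FaceClosed (translateCube x ⁻¹' A) :=
  fun _ hQ _ hR => hA hQ (cubeSet_translateCube_subset x hR)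

lemma lmapDomain_translateCube_consChain (x : Fin (d + 1) → ℤ) (a : ℤ × Bool) (c : CubChain d) :
    Finsupp.lmapDomain ℤ ℤ (translateCube x) (consChain a c)
      = consChain (a.1 + x 0, a.2)
        (Finsupp.lmapDomain ℤ ℤ (translateCube (Fin.tail x)) c) := by
  simp only [consChain, Finsupp.lmapDomain_apply, ← Finsupp.mapDomain_comp, Function.comp_def,
    translateCube_cons]

lemma boundaryHom_lmapDomain_translateCube (x : Fin d → ℤ) :
    boundaryHom d ∘ₗ Finsupp.lmapDomain ℤ ℤ (translateCube x)
      = Finsupp.lmapDomain ℤ ℤ (translateCube x) ∘ₗ boundaryHom d := by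
  induction d with
  | zero =>
    refine Finsupp.lhom_ext' fun Q => LinearMap.ext_ring ?_
    simp [boundaryHom_single_one, boundaryCube]
  | succ d ih =>
    refine cubChain_hom_ext fun a => LinearMap.ext fun c => ?_
    have hc := LinearMap.congr_fun (ih (Fin.tail x)) c
    simp only [LinearMap.comp_apply] at hc ⊢
    rw [lmapDomain_translateCube_consChain, boundaryHom_consChain, boundaryHom_consChain, hc,
      map_add, map_smul, lmapDomain_translateCube_consChain]
    rw [apply_ite (Finsupp.lmapDomain ℤ ℤ (translateCube x)), map_zero, map_sub,
      lmapDomain_translateCube_consChain, lmapDomain_translateCube_consChain, add_right_comm a.1]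

lemma cells_preimage_translateCube (x : Fin d → ℤ) (k : ℕ) (A : Set (ElemCube d)) :
    cells k (translateCube x ⁻¹' A) = translateCube x ⁻¹' cells k A := rfl

lemma lmapDomain_translateCube_supported_preimage (x : Fin d → ℤ) (A : Set (ElemCube d)) :
    (Finsupp.supported ℤ ℤ (translateCube x ⁻¹' A)).map (Finsupp.lmapDomain ℤ ℤ (translateCube x))
      = Finsupp.supported ℤ ℤ A := by
  rw [Finsupp.lmapDomain_supported, Set.image_preimage_eq _ (translateCube_surjective x)]

lemma boundaryRank_preimage_translateCube (x : Fin d → ℤ) (k : ℕ) (A : Set (ElemCube d)) :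
    boundaryRank k (translateCube x ⁻¹' A) = boundaryRank k A := by
  rw [boundaryRank, boundaryRank, cells_preimage_translateCube,
    ← lmapDomain_translateCube_supported_preimage x (cells k A), ← Submodule.map_comp,
    boundaryHom_lmapDomain_translateCube, Submodule.map_comp]
  exact (Submodule.equivMapOfInjective _
    (Finsupp.mapDomain_injective (translateCube_injective x)) _).finrank_eq

lemma cellBetti_preimage_translateCube (hfin : A.Finite) (hA : FaceClosed A) (x : Fin d → ℤ)
    (q : ℕ) : cellBetti q (translateCube x ⁻¹' A) = cellBetti q A := by
  have hformula := cellBetti_add_boundaryRank_add_boundaryRank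
    (hfin.preimage (translateCube_injective x).injOn) (hA.preimage_translateCube x) q
  have hcells : (translateCube x ⁻¹' cells q A).ncard = (cells q A).ncard :=
    Set.ncard_preimage_of_injective_subset_range (translateCube_injective x)
      ((Set.subset_univ _).trans_eq (translateCube_surjective x).range_eq.symm)
  rw [boundaryRank_preimage_translateCube, boundaryRank_preimage_translateCube,
    cells_preimage_translateCube, hcells,
    ← cellBetti_add_boundaryRank_add_boundaryRank hfin hA q] at hformula
  lia

end Translation

section Boxes

variable {d L : ℕ} {a : Fin d → ℤ} {Q : ElemCube d}

/-- The elementary cubes contained in the box `∏ i, [a i, a i + L]`. -/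
def boxCells (a : Fin d → ℤ) (L : ℕ) : Finset (ElemCube d) :=
  Fintype.piFinset fun i =>
    Finset.Icc (a i) (a i + L) ×ˢ {false} ∪ Finset.Ico (a i) (a i + L) ×ˢ {true}

lemma mem_boxCells : Q ∈ boxCells a L ↔
    ∀ i, a i ≤ (Q i).1 ∧ (Q i).1 + (if (Q i).2 then 1 else 0) ≤ a i + L := by
  rw [boxCells, Fintype.mem_piFinset]
  refine forall_congr' fun i => ?_
  rcases Q i with ⟨l, _ | _⟩ <;> simp

lemma card_boxCells (a : Fin d → ℤ) (L : ℕ) : (boxCells a L).card = (2 * L + 1) ^ d := by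
  have hside : ∀ b : ℤ, (Finset.Icc b (b + L) ×ˢ {false} ∪ Finset.Ico b (b + L) ×ˢ {true} :
      Finset (ℤ × Bool)).card = 2 * L + 1 := by
    intro b
    rw [Finset.card_union_of_disjoint (Finset.disjoint_product.2 (Or.inr (by simp)))]
    simp only [Finset.card_product, Finset.card_singleton, Int.card_Icc, Int.card_Ico]
    lia
  simp only [boxCells, Fintype.card_piFinset, hside, Finset.prod_const, Finset.card_univ,
    Fintype.card_fin]

lemma cubeSet_eq_Icc (Q : ElemCube d) : cubeSet Q
    = Set.Icc (fun i => ((Q i).1 : ℝ)) (fun i => (Q i).1 + (if (Q i).2 then 1 else 0)) :=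
  Set.ext fun _ => forall_and

lemma lambda_eq_Icc (d n : ℕ) : lambda d n = Set.Icc (fun _ => -(n : ℝ)) (fun _ => (n : ℝ)) :=
  Set.ext fun _ => forall_and

lemma coe_boxCells (a : Fin d → ℤ) (L : ℕ) : (boxCells a L : Set (ElemCube d))
    = cubesIn (Set.Icc (fun i => (a i : ℝ)) (fun i => (a i : ℝ) + L)) := by
  ext Q
  have hne : (fun i => ((Q i).1 : ℝ)) ≤ fun i => ((Q i).1 : ℝ) + if (Q i).2 then 1 else 0 := by
    intro i
    dsimp only
    split_ifs <;> simp
  rw [Finset.mem_coe, mem_boxCells, cubesIn, Set.mem_ofPred_eq, cubeSet_eq_Icc,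
    Set.Icc_subset_Icc_iff hne, Pi.le_def, Pi.le_def, ← forall_and]
  norm_cast

lemma faceClosed_boxCells (a : Fin d → ℤ) (L : ℕ) :
    FaceClosed (boxCells a L : Set (ElemCube d)) :=
  coe_boxCells a L ▸ faceClosed_cubesIn _

lemma translateCube_preimage_boxCells (x a : Fin d → ℤ) (L : ℕ) :
    translateCube x ⁻¹' (boxCells a L : Set (ElemCube d)) = boxCells (a - x) L := by
  ext Q
  simp only [Set.mem_preimage, Finset.mem_coe, mem_boxCells, translateCube, Pi.sub_apply]
  refine forall_congr' fun i => ?_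
  lia

lemma coe_boxCells_neg (d n : ℕ) :
    (boxCells (fun _ : Fin d => -(n : ℤ)) (2 * n) : Set (ElemCube d)) = cubesIn (lambda d n) := by
  rw [coe_boxCells, lambda_eq_Icc]
  congr! 2 <;> funext i <;> push_cast <;> ring

end Boxes

section ActiveCells

variable {d : ℕ}

/-- The elementary cubes contained in some cube of the random cubical set `X(t)`. -/
def activeCells (t : ℝ) (ω : Config d) : Set (ElemCube d) :=
  {Q | ∃ R, (ω R : ℝ) ≤ t ∧ cubeSet Q ⊆ cubeSet R}

lemma faceClosed_activeCells (t : ℝ) (ω : Config d) : FaceClosed (activeCells t ω) :=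
  fun _ ⟨S, hS, hQS⟩ _ hRQ => ⟨S, hS, hRQ.trans hQS⟩

lemma Icc_subset_Icc_of_midpoint_mem {l m : ℤ} {b c : Bool}
    (h : (l : ℝ) + (if b then 1 / 2 else 0) ∈ Set.Icc (m : ℝ) (m + if c then 1 else 0)) :
    Set.Icc (l : ℝ) (l + if b then 1 else 0) ⊆ Set.Icc (m : ℝ) (m + if c then 1 else 0) := by
  obtain ⟨hml, hlm⟩ := h
  have hleft : m < l + 1 := by
    have : (m : ℝ) < l + 1 := hml.trans_lt (by split_ifs <;> norm_num)
    exact_mod_cast this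
  have hright : l + (if b then 1 else 0) < m + (if c then 1 else 0) + 1 := by
    have : (l : ℝ) + (if b then 1 else 0) < m + (if c then 1 else 0) + 1 := by
      split_ifs at hlm ⊢ <;> linarith
    exact_mod_cast this
  refine Set.Icc_subset_Icc ?_ ?_
  · exact_mod_cast Int.lt_add_one_iff.1 hleft
  · exact_mod_cast Int.lt_add_one_iff.1 hright

lemma cubesIn_cubSet (t : ℝ) (ω : Config d) : cubesIn (cubSet ω t) = activeCells t ω := by
  ext Q
  refine ⟨fun hQ => ?_, fun ⟨R, hR, hQR⟩ => hQR.trans (Set.subset_biUnion_of_mem hR)⟩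
  have hmid : (fun i => ((Q i).1 : ℝ) + if (Q i).2 then 1 / 2 else 0) ∈ cubeSet Q := by
    intro i
    constructor <;> dsimp only <;> split_ifs <;> norm_num
  obtain ⟨R, hR, hmidR⟩ := Set.mem_iUnion₂.1 (hQ hmid)
  exact ⟨R, hR, fun x hx i => Icc_subset_Icc_of_midpoint_mem (hmidR i) (hx i)⟩

lemma bettiN_eq_cellBetti (d q n : ℕ) (t : ℝ) (ω : Config d) :
    bettiN d q n t ω
      = cellBetti q (activeCells t ω ∩ boxCells (fun _ : Fin d => -(n : ℤ)) (2 * n)) := by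
  rw [bettiN, betti_eq_cellBetti_cubesIn, cubesIn_inter, cubesIn_cubSet, coe_boxCells_neg]

lemma finite_activeCells_inter (t : ℝ) (ω : Config d) (F : Finset (ElemCube d)) :
    (activeCells t ω ∩ F).Finite := F.finite_toSet.inter_of_right _

lemma faceClosed_activeCells_inter_boxCells (t : ℝ) (ω : Config d) (a : Fin d → ℤ) (L : ℕ) :
    FaceClosed (activeCells t ω ∩ boxCells a L) :=
  (faceClosed_activeCells t ω).inter (faceClosed_boxCells a L)

lemma cellBetti_activeCells_inter_boxCells_le (q : ℕ) (t : ℝ) (ω : Config d) (a : Fin d → ℤ)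
    (L : ℕ) : cellBetti q (activeCells t ω ∩ boxCells a L) ≤ (2 * L + 1) ^ d := by
  rw [← card_boxCells a L, ← Set.ncard_coe_finset]
  exact (cellBetti_le_ncard (finite_activeCells_inter _ _ _)
    (faceClosed_activeCells_inter_boxCells _ _ _ _)).trans
    (Set.ncard_le_ncard Set.inter_subset_right (Finset.finite_toSet _))

lemma measurableSet_mem_activeCells (t : ℝ) (Q : ElemCube d) :
    MeasurableSet {ω : Config d | Q ∈ activeCells t ω} := by
  have hmem : ∀ R : ElemCube d, MeasurableSet {ω : Config d | (ω R : ℝ) ≤ t} := fun R =>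
    measurableSet_le (measurable_subtype_coe.comp (measurable_pi_apply R)) measurable_const
  have hunion : {ω : Config d | Q ∈ activeCells t ω}
      = ⋃ R ∈ {R : ElemCube d | cubeSet Q ⊆ cubeSet R}, {ω | (ω R : ℝ) ≤ t} := by
    ext ω
    simp [activeCells, and_comm]
  rw [hunion]
  exact MeasurableSet.biUnion (Set.to_countable _) fun R _ => hmem R

lemma measurable_comp_activeCells_inter {β : Type*} [MeasurableSpace β] (t : ℝ)
    (F : Finset (ElemCube d)) (g : Set (ElemCube d) → β) :
    Measurable fun ω : Config d => g (activeCells t ω ∩ F) := by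
  have hindicator : Measurable fun (ω : Config d) (Q : F) => (Q : ElemCube d) ∈ activeCells t ω :=
    measurable_pi_lambda _ fun Q => measurableSet_setOfPred.1 (measurableSet_mem_activeCells t Q.1)
  have hdiscrete : Measurable fun p : F → Prop => g {Q | ∃ hQ : Q ∈ F, p ⟨Q, hQ⟩} :=
    Measurable.of_discrete
  have hinter : ∀ ω : Config d, activeCells t ω ∩ F
      = {Q | ∃ hQ : Q ∈ F, ((⟨Q, hQ⟩ : F) : ElemCube d) ∈ activeCells t ω} := by
    intro ω
    ext Q
    simp [and_comm]
  simp only [hinter]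
  exact hdiscrete.comp hindicator

end ActiveCells

section Shift

variable {d : ℕ}

/-- The translation action of `ℤ^d` on configurations, `x +ᵥ ω = τ_x ω`. -/
instance : AddAction (Fin d → ℤ) (Config d) where
  vadd := configShift
  zero_vadd ω := funext fun Q => by
    change ω (translateCube (-0) Q) = ω Q
    rw [neg_zero, translateCube_zero]
  add_vadd x y ω := funext fun Q => by
    change ω (translateCube (-(x + y)) Q) = ω (translateCube (-y) (translateCube (-x) Q))
    rw [translateCube_translateCube, neg_add_rev]

lemma vadd_config_apply (x : Fin d → ℤ) (ω : Config d) (Q : ElemCube d) :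
    (x +ᵥ ω) Q = ω (translateCube (-x) Q) := rfl

instance : MeasurableConstVAdd (Fin d → ℤ) (Config d) where
  measurable_const_vadd x :=
    measurable_pi_lambda _ fun Q => measurable_pi_apply (translateCube (-x) Q)

lemma Stationary.vaddInvariantMeasure {P : Measure (Config d)} (hstat : Stationary P) :
    VAddInvariantMeasure (Fin d → ℤ) (Config d) P where
  measure_preimage_vadd x _ hA := hstat x _ hA

lemma ErgodicConfig.ergodicVAdd {P : Measure (Config d)} [IsProbabilityMeasure P]
    (hstat : Stationary P) (herg : ErgodicConfig P) :
    ErgodicVAdd (Fin d → ℤ) (Config d) P := by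
  have := hstat.vaddInvariantMeasure
  refine ergodicVAdd_of_forall_invariant fun A hA hinv => eventuallyConst_set.2 ?_
  rcases herg A hA hinv with hzero | hone
  · exact Or.inr (measure_eq_zero_iff_ae_notMem.1 hzero)
  · exact Or.inl ((prob_compl_eq_zero_iff hA).2 hone)

lemma activeCells_vadd (t : ℝ) (x : Fin d → ℤ) (ω : Config d) :
    activeCells t (x +ᵥ ω) = translateCube (-x) ⁻¹' activeCells t ω := by
  ext Q
  constructor
  · rintro ⟨R, hR, hQR⟩
    exact ⟨_, hR, cubeSet_translateCube_subset (-x) hQR⟩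
  · rintro ⟨R, hR, hQR⟩
    refine ⟨translateCube x R, ?_, ?_⟩
    · rwa [vadd_config_apply, translateCube_neg_translateCube]
    · have := cubeSet_translateCube_subset x hQR
      rwa [translateCube_translateCube_neg] at this

lemma cellBetti_activeCells_vadd_inter_boxCells (q : ℕ) (t : ℝ) (x a : Fin d → ℤ) (L : ℕ)
    (ω : Config d) :
    cellBetti q (activeCells t (x +ᵥ ω) ∩ boxCells a L)
      = cellBetti q (activeCells t ω ∩ boxCells (a - x) L) := by
  have hpre : activeCells t (x +ᵥ ω) ∩ boxCells a L
      = translateCube (-x) ⁻¹' (activeCells t ω ∩ boxCells (a - x) L) := by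
    rw [activeCells_vadd, Set.preimage_inter, translateCube_preimage_boxCells, sub_neg_eq_add,
      sub_add_cancel]
  rw [hpre, cellBetti_preimage_translateCube (finite_activeCells_inter _ _ _)
    (faceClosed_activeCells_inter_boxCells _ _ _ _)]

end Shift

section Blocks

variable {d q L m : ℕ} {t : ℝ}

lemma abs_cellBetti_inter_sub_sum_le {ι : Type*} {s : Finset ι} {A : Set (ElemCube d)}
    {B : Finset (ElemCube d)} {C : ι → Finset (ElemCube d)} (hA : FaceClosed A)
    (hB : FaceClosed (B : Set (ElemCube d))) (hC : ∀ i ∈ s, FaceClosed (C i : Set (ElemCube d)))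
    (hCB : ∀ i ∈ s, C i ⊆ B) (hdisj : (s : Set ι).PairwiseDisjoint C) :
    |(cellBetti q (A ∩ B) : ℝ) - ∑ i ∈ s, (cellBetti q (A ∩ C i) : ℝ)|
      ≤ B.card - ∑ i ∈ s, ((C i).card : ℝ) := by
  classical
  have hAC : ∀ i ∈ s, FaceClosed (A ∩ C i) := fun i hi => hA.inter (hC i hi)
  have hsum := cellBetti_biUnion (q := q) s (A := fun i => A ∩ C i)
    (fun i _ => (C i).finite_toSet.inter_of_right A) hAC fun i hi j hj hij =>
      (Finset.disjoint_coe.2 (hdisj hi hj hij)).mono Set.inter_subset_right Set.inter_subset_right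
  have hsub : ⋃ i ∈ s, A ∩ C i ⊆ A ∩ B :=
    Set.iUnion₂_subset fun i hi => Set.inter_subset_inter_right A (by exact_mod_cast hCB i hi)
  have hrest : (A ∩ B) \ ⋃ i ∈ s, A ∩ C i ⊆ (B \ s.biUnion C : Finset (ElemCube d)) := by
    rintro Q ⟨⟨hQA, hQB⟩, hQ⟩
    simp only [Set.mem_iUnion₂, not_exists] at hQ
    simp only [Finset.mem_coe, Finset.mem_sdiff, Finset.mem_biUnion, not_exists, not_and]
    exact ⟨hQB, fun i hi hQC => hQ i hi ⟨hQA, hQC⟩⟩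
  calc |(cellBetti q (A ∩ B) : ℝ) - ∑ i ∈ s, (cellBetti q (A ∩ C i) : ℝ)|
      = |(cellBetti q (A ∩ B) : ℝ) - cellBetti q (⋃ i ∈ s, A ∩ C i)| := by
        rw [hsum, Nat.cast_sum]
    _ ≤ ((A ∩ B) \ ⋃ i ∈ s, A ∩ C i).ncard :=
        abs_cellBetti_sub_le (B.finite_toSet.inter_of_right A) hsub (faceClosed_biUnion hAC)
          (hA.inter hB)
    _ ≤ (B \ s.biUnion C).card := by
        rw [← Set.ncard_coe_finset]
        exact_mod_cast Set.ncard_le_ncard hrest (Finset.finite_toSet _)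
    _ = B.card - ∑ i ∈ s, ((C i).card : ℝ) := by
        rw [Finset.cast_card_sdiff (Finset.biUnion_subset.2 hCB), Finset.card_biUnion hdisj,
          Nat.cast_sum]

lemma boxCells_subset_boxCells {a b : Fin d → ℤ} {K L : ℕ}
    (h : ∀ i, b i ≤ a i ∧ a i + K ≤ b i + L) : boxCells a K ⊆ boxCells b L := fun _ hQ =>
  mem_boxCells.2 fun i =>
    ⟨(h i).1.trans (mem_boxCells.1 hQ i).1, (mem_boxCells.1 hQ i).2.trans (h i).2⟩

lemma disjoint_boxCells {a b : Fin d → ℤ} (i : Fin d) (h : (L : ℤ) < |a i - b i|) :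
    Disjoint (boxCells a L) (boxCells b L) := by
  refine Finset.disjoint_left.2 fun Q hQa hQb => ?_
  obtain ⟨haQ, hQa⟩ := mem_boxCells.1 hQa i
  obtain ⟨hbQ, hQb⟩ := mem_boxCells.1 hQb i
  have hab := abs_le.not.1 h.not_ge
  split_ifs at hQa hQb <;> lia

/-- The `q`-th Betti number of the part of `X(t)` in the block `[0, L]^d`. -/
def blockBetti (q L : ℕ) (t : ℝ) (ω : Config d) : ℝ :=
  cellBetti q (activeCells t ω ∩ boxCells (0 : Fin d → ℤ) L)

lemma blockBetti_vadd (x : Fin d → ℤ) (ω : Config d) :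
    blockBetti q L t (x +ᵥ ω) = cellBetti q (activeCells t ω ∩ boxCells (-x) L) := by
  rw [blockBetti, cellBetti_activeCells_vadd_inter_boxCells, zero_sub]

lemma measurable_blockBetti (q L : ℕ) (t : ℝ) :
    Measurable (blockBetti q L t : Config d → ℝ) :=
  measurable_comp_activeCells_inter t (boxCells 0 L) fun A => (cellBetti q A : ℝ)

lemma abs_blockBetti_le (q L : ℕ) (t : ℝ) (ω : Config d) :
    |blockBetti q L t ω| ≤ (2 * L + 1) ^ d := by
  rw [blockBetti, Nat.abs_cast]
  exact_mod_cast cellBetti_activeCells_inter_boxCells_le q t ω 0 L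

lemma abs_bettiN_sub_sum_blockBetti_le (q : ℕ) (t : ℝ) (ω : Config d)
    {s : Finset (Fin d → ℤ)} (hs : s ⊆ zbox d m)
    (hsep : (s : Set (Fin d → ℤ)).Pairwise fun x y => ∃ i, (L : ℤ) < |x i - y i|) :
    |(bettiN d q (m + L) t ω : ℝ) - ∑ x ∈ s, blockBetti q L t (x +ᵥ ω)|
      ≤ (4 * (m + L) + 1) ^ d - s.card * (2 * L + 1) ^ d := by
  have hbound := abs_cellBetti_inter_sub_sum_le (q := q) (s := s)
    (C := fun x => boxCells (-x) L) (faceClosed_activeCells t ω)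
    (faceClosed_boxCells (fun _ => -((m + L : ℕ) : ℤ)) (2 * (m + L)))
    (fun x _ => faceClosed_boxCells (-x) L)
    (fun x hx => boxCells_subset_boxCells fun i => by
      have := mem_zbox.1 (hs hx) i
      simp only [Pi.neg_apply]
      lia)
    (fun x hx y hy hxy => by
      obtain ⟨i, hi⟩ := hsep hx hy hxy
      refine disjoint_boxCells i ?_
      rwa [Pi.neg_apply, Pi.neg_apply, neg_sub_neg, abs_sub_comm])
  simp only [card_boxCells, Finset.sum_const, nsmul_eq_mul] at hbound
  simp only [bettiN_eq_cellBetti, blockBetti_vadd]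
  refine hbound.trans_eq ?_
  push_cast
  ring

lemma exists_lt_abs_sub_of_intCast_eq {x y : Fin d → ℤ} (hxy : x ≠ y)
    (h : ∀ i, (x i : ZMod (L + 1)) = y i) : ∃ i, (L : ℤ) < |x i - y i| := by
  obtain ⟨i, hi⟩ := Function.ne_iff.1 hxy
  have hdvd := (ZMod.intCast_eq_intCast_iff_dvd_sub _ _ _).1 (h i).symm
  have hle := Int.le_of_dvd (abs_pos.2 (sub_ne_zero.2 hi)) ((dvd_abs _ _).2 hdvd)
  exact ⟨i, by lia⟩

-- The blocks whose corners lie in one residue class modulo `L + 1` are pairwise disjoint, and they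
-- leave few cells of the large box uncovered; the bound is the sum over all residue classes.
lemma abs_mul_bettiN_sub_sum_blockBetti_le (q L m : ℕ) (t : ℝ) (ω : Config d) :
    |((L : ℝ) + 1) ^ d * bettiN d q (m + L) t ω - ∑ x ∈ zbox d m, blockBetti q L t (x +ᵥ ω)|
      ≤ (L + 1) ^ d * (4 * (m + L) + 1) ^ d - (2 * m) ^ d * (2 * L + 1) ^ d := by
  classical
  let residue : (Fin d → ℤ) → Fin d → ZMod (L + 1) := fun x i => (x i : ZMod (L + 1))
  let fiber : (Fin d → ZMod (L + 1)) → Finset (Fin d → ℤ) := fun y =>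
    {x ∈ zbox d m | residue x = y}
  have hclass : ∀ y,
      |(bettiN d q (m + L) t ω : ℝ) - ∑ x ∈ fiber y, blockBetti q L t (x +ᵥ ω)|
        ≤ (4 * (m + L) + 1) ^ d - (fiber y).card * (2 * L + 1) ^ d := by
    refine fun y => abs_bettiN_sub_sum_blockBetti_le q t ω (Finset.filter_subset _ _) ?_
    intro x hx x' hx' hne
    have hresidue : residue x = residue x' :=
      (Finset.mem_filter.1 hx).2.trans (Finset.mem_filter.1 hx').2.symm
    exact exists_lt_abs_sub_of_intCast_eq hne (congrFun hresidue)
  have hclasses : ((Finset.univ : Finset (Fin d → ZMod (L + 1))).card : ℝ) = ((L : ℝ) + 1) ^ d := by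
    simp
  have hcard : ∑ y, ((fiber y).card : ℝ) = (2 * m) ^ d := by
    have := Finset.card_eq_sum_card_fiberwise (s := zbox d m) (f := residue) (t := Finset.univ)
      (by simp)
    rw [card_zbox] at this
    exact_mod_cast this.symm
  calc
    _ = |∑ y, ((bettiN d q (m + L) t ω : ℝ) - ∑ x ∈ fiber y, blockBetti q L t (x +ᵥ ω))| := by
        rw [Finset.sum_sub_distrib, Finset.sum_fiberwise, Finset.sum_const, nsmul_eq_mul,
          hclasses]
    _ ≤ ∑ y, ((4 * ((m : ℝ) + L) + 1) ^ d - (fiber y).card * (2 * L + 1) ^ d) :=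
        (Finset.abs_sum_le_sum_abs _ _).trans (Finset.sum_le_sum fun y _ => hclass y)
    _ = _ := by
        rw [Finset.sum_sub_distrib, ← Finset.sum_mul, hcard, Finset.sum_const, nsmul_eq_mul,
          hclasses]

lemma abs_bettiN_div_sub_zboxAverage_le (q L m : ℕ) (t : ℝ) (ω : Config d) :
    |((2 * ((m + L : ℕ) : ℝ)) ^ d)⁻¹ * bettiN d q (m + L) t ω
        - (m / (m + L)) ^ d * (zboxAverage d m (blockBetti q L t) ω / (L + 1) ^ d)|
      ≤ ((4 * (m + L) + 1) / (2 * (m + L))) ^ d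
        - (m / (m + L)) ^ d * ((2 * L + 1) / (L + 1)) ^ d := by
  have hsum : ∑ x ∈ zbox d m, blockBetti q L t (x +ᵥ ω)
      = (2 * m) ^ d * zboxAverage d m (blockBetti q L t) ω := by
    rw [← Finset.card_smul_expect, card_zbox, nsmul_eq_mul]
    push_cast
    rfl
  have hblocks := abs_mul_bettiN_sub_sum_blockBetti_le q L m t ω
  have hscale : 0 ≤ ((2 * ((m : ℝ) + L)) ^ d * (L + 1) ^ d)⁻¹ := by positivity
  have hscaled := mul_le_mul_of_nonneg_left hblocks hscale
  rw [hsum, ← abs_of_nonneg hscale, ← abs_mul, abs_of_nonneg hscale] at hscaled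
  refine (le_of_eq ?_).trans (hscaled.trans (le_of_eq ?_))
  · congr 1
    push_cast
    simp only [div_pow, mul_pow]
    field_simp
  · simp only [div_pow, mul_pow]
    field_simp

end Blocks

section Limits

lemma eventually_abs_sub_lt_of_abs_sub_le {ι : Type*} {l : Filter ι} {x z e : ι → ℝ}
    {u δ ε : ℝ} (hxz : ∀ i, |x i - z i| ≤ e i) (hz : Tendsto z l (𝓝 u))
    (he : Tendsto e l (𝓝 δ)) (hε : 0 < ε) : ∀ᶠ i in l, |x i - u| < δ + ε := by
  have hlim : Tendsto (fun i => e i + |z i - u|) l (𝓝 (δ + |u - u|)) :=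
    he.add (hz.sub_const u).abs
  rw [sub_self, abs_zero, add_zero] at hlim
  filter_upwards [hlim.eventually (gt_mem_nhds (lt_add_of_pos_right δ hε))] with i hi
  exact ((abs_sub_le _ (z i) _).trans (add_le_add_left (hxz i) _)).trans_lt hi

lemma exists_tendsto_of_eventually_abs_sub_lt {b u δ : ℕ → ℝ} (hδ : Tendsto δ atTop (𝓝 0))
    (h : ∀ L, ∀ ε > 0, ∀ᶠ n in atTop, |b n - u L| < δ L + ε) :
    ∃ c, Tendsto u atTop (𝓝 c) ∧ Tendsto b atTop (𝓝 c) := by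
  have hcauchy : CauchySeq b := by
    refine Metric.cauchySeq_iff'.2 fun ε hε => ?_
    obtain ⟨L, hL⟩ := (hδ.eventually (gt_mem_nhds (show (0 : ℝ) < ε / 4 by positivity))).exists
    obtain ⟨N, hN⟩ := eventually_atTop.1 (h L (ε / 4) (by positivity))
    refine ⟨N, fun n hn => ?_⟩
    have htriangle := abs_sub_le (b n) (u L) (b N)
    rw [abs_sub_comm (u L)] at htriangle
    rw [Real.dist_eq]
    linarith [hN n hn, hN N le_rfl]
  obtain ⟨c, hc⟩ := cauchySeq_tendsto_of_complete hcauchy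
  refine ⟨c, ?_, hc⟩
  have hu : ∀ L, dist (u L) c ≤ δ L := by
    refine fun L => le_of_forall_pos_le_add fun ε hε => ?_
    rw [dist_comm]
    exact le_of_tendsto ((hc.sub_const (u L)).abs) ((h L ε hε).mono fun _ hn => hn.le)
  exact tendsto_iff_dist_tendsto_zero.2 (squeeze_zero (fun _ => dist_nonneg) hu hδ)

lemma ae_tendsto_of_ae_exists_tendsto {Ω : Type*} [MeasurableSpace Ω] {μ : Measure Ω} [NeZero μ]
    {X : ℕ → Ω → ℝ} {u : ℕ → ℝ}
    (h : ∀ᵐ ω ∂μ, ∃ c, Tendsto u atTop (𝓝 c) ∧ Tendsto (X · ω) atTop (𝓝 c)) :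
    ∃ c, ∀ᵐ ω ∂μ, Tendsto (X · ω) atTop (𝓝 c) := by
  obtain ⟨-, c, hc, -⟩ := h.exists
  refine ⟨c, h.mono fun ω ⟨c', hc', hX⟩ => ?_⟩
  rwa [tendsto_nhds_unique hc hc']

lemma limsup_integral_eq_of_ae_tendsto {Ω : Type*} [MeasurableSpace Ω] {μ : Measure Ω}
    [IsProbabilityMeasure μ] {X : ℕ → Ω → ℝ} {c C : ℝ} (hX : ∀ n, Measurable (X n))
    (hC : ∀ n ω, |X n ω| ≤ C) (hc : ∀ᵐ ω ∂μ, Tendsto (X · ω) atTop (𝓝 c)) :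
    limsup (fun n => ∫ ω, X n ω ∂μ) atTop = c := by
  have hlim := tendsto_integral_of_dominated_convergence (fun _ => C)
    (fun n => (hX n).aestronglyMeasurable) (integrable_const C) (fun n => ae_of_all μ (hC n)) hc
  simpa using hlim.limsup_eq

variable {d : ℕ}

lemma tendsto_two_pow_sub_block_ratio (d : ℕ) :
    Tendsto (fun L : ℕ => (2 : ℝ) ^ d - ((2 * L + 1) / (L + 1)) ^ d) atTop (𝓝 0) := by
  have hratio : Tendsto (fun L : ℕ => (2 * (L : ℝ) + 1) / (L + 1)) atTop (𝓝 2) := by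
    simpa [add_comm] using
      tendsto_add_mul_div_add_mul_atTop_nhds (1 : ℝ) 1 2 one_ne_zero
  rw [← sub_self ((2 : ℝ) ^ d)]
  exact (hratio.pow d).const_sub (2 ^ d)

lemma eventually_abs_bettiN_div_sub_lt {q L : ℕ} {t c ε : ℝ} {ω : Config d}
    (hc : Tendsto (fun m => zboxAverage d m (blockBetti q L t) ω) atTop (𝓝 c)) (hε : 0 < ε) :
    ∀ᶠ n : ℕ in atTop, |((2 * (n : ℝ)) ^ d)⁻¹ * bettiN d q n t ω - c / (L + 1) ^ d|
      < 2 ^ d - ((2 * L + 1) / (L + 1)) ^ d + ε := by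
  have hinner : Tendsto (fun m : ℕ => ((m : ℝ) / (m + L)) ^ d) atTop (𝓝 1) := by
    simpa using (tendsto_natCast_div_add_atTop (L : ℝ)).pow d
  have hcells : Tendsto (fun m : ℕ => ((4 * ((m : ℝ) + L) + 1) / (2 * (m + L))) ^ d) atTop
      (𝓝 (2 ^ d)) := by
    have hratio :=
      tendsto_add_mul_div_add_mul_atTop_nhds (4 * (L : ℝ) + 1) (2 * L) 4 two_ne_zero
    rw [show (4 : ℝ) / 2 = 2 by norm_num] at hratio
    exact (hratio.congr fun m => by ring_nf).pow d
  have hshift := eventually_abs_sub_lt_of_abs_sub_le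
    (fun m => abs_bettiN_div_sub_zboxAverage_le q L m t ω) (hinner.mul (hc.div_const _))
    (hcells.sub (hinner.mul_const _)) hε
  rw [one_mul, one_mul] at hshift
  rwa [← map_add_atTop_eq_nat L, eventually_map]

lemma measurable_bettiN_div (d q n : ℕ) (t : ℝ) :
    Measurable fun ω : Config d => ((2 * (n : ℝ)) ^ d)⁻¹ * bettiN d q n t ω := by
  simp only [bettiN_eq_cellBetti]
  exact (measurable_comp_activeCells_inter t _ fun A => (cellBetti q A : ℝ)).const_mul _

lemma abs_bettiN_div_le (d q n : ℕ) (t : ℝ) (ω : Config d) :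
    |((2 * (n : ℝ)) ^ d)⁻¹ * bettiN d q n t ω| ≤ 3 ^ d := by
  have hcells : (bettiN d q n t ω : ℝ) ≤ (4 * n + 1) ^ d := by
    rw [bettiN_eq_cellBetti]
    refine (Nat.cast_le.2 (cellBetti_activeCells_inter_boxCells_le q t ω _ (2 * n))).trans_eq ?_
    push_cast
    ring
  rw [abs_of_nonneg (by positivity)]
  calc ((2 * (n : ℝ)) ^ d)⁻¹ * bettiN d q n t ω
      ≤ ((2 * (n : ℝ)) ^ d)⁻¹ * (4 * n + 1) ^ d := by gcongr
    _ = ((4 * n + 1) / (2 * n)) ^ d := by rw [div_pow, div_eq_inv_mul]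
    _ ≤ 3 ^ d := by
        gcongr
        rcases n.eq_zero_or_pos with rfl | hn
        · simp
        · have hn' : (1 : ℝ) ≤ n := by exact_mod_cast hn
          rw [div_le_iff₀ (by positivity)]
          linarith

lemma exists_ae_tendsto_bettiN_div (d q : ℕ) (t : ℝ) (P : Measure (Config d))
    [IsProbabilityMeasure P] [ErgodicVAdd (Fin d → ℤ) (Config d) P] :
    ∃ c, ∀ᵐ ω ∂P, Tendsto (fun n : ℕ => ((2 * (n : ℝ)) ^ d)⁻¹ * (bettiN d q n t ω : ℝ)) atTop
      (𝓝 c) := by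
  choose c hc using fun L => exists_ae_tendsto_zboxAverage (k := d) (μ := P)
    (measurable_blockBetti q L t) (abs_blockBetti_le q L t)
  refine ae_tendsto_of_ae_exists_tendsto (u := fun L => c L / ((L : ℝ) + 1) ^ d) ?_
  filter_upwards [ae_all_iff.2 hc] with ω hω
  exact exists_tendsto_of_eventually_abs_sub_lt (tendsto_two_pow_sub_block_ratio d)
    fun L ε hε => eventually_abs_bettiN_div_sub_lt (hω L) hε

end Limits

/-- **LLN for Betti numbers.** Fix `0 ≤ q < d` and `t ∈ [0,1]`, and let `P` be a
stationary and ergodic probability measure on the configuration space `Ω = [0,1]^{K^d}`.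
Then `|Λ_n|⁻¹ β_q^n(t)` converges `P`-almost surely, as `n → ∞`, to the non-random constant
`β̂_q(t) = limsup_{n→∞} |Λ_n|⁻¹ E[β_q^n(t)]`. -/
theorem lln_betti (d q : ℕ) (hq : q < d) (t : ℝ) (ht : t ∈ Set.Icc (0 : ℝ) 1)
    (P : Measure (Config d)) [IsProbabilityMeasure P]
    (hstat : Stationary P) (herg : ErgodicConfig P) :
    ∀ᵐ ω ∂P,
      Tendsto (fun n : ℕ => ((2 * (n : ℝ)) ^ d)⁻¹ * (bettiN d q n t ω : ℝ))
        atTop (𝓝 (betaHat d q P t)) := by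
  have := herg.ergodicVAdd hstat
  obtain ⟨c, hc⟩ := exists_ae_tendsto_bettiN_div d q t P
  have hbetaHat : betaHat d q P t = c := by
    simpa only [betaHat, integral_const_mul] using
      limsup_integral_eq_of_ae_tendsto (fun n => measurable_bettiN_div d q n t)
        (fun n => abs_bettiN_div_le d q n t) hc
  rwa [hbetaHat]

end
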